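/- arXiv:1903.02896 — 4 statements merged into one kernel-verified Lean document; each statement's English description precedes it below -/
import Mathlib

section
/- For the full shift T on X = ∏_{n∈ℤ} M over a perfect Polish metric space M, the set M_e of ergodic T-invariant Borel probability measures is a residual subset of M(T) endowed with the weak topology. -/
open Filter MeasureTheory Topology Metric Set
open scoped ENNReal NNReal

noncomputable section
attribute [local instance] Classical.propDecidable

/-- The full (bilateral) shift on the product space `ℤ → M`: `(T x) i = x (i - 1)`. -/
def fullShift {M : Type*} (x : ℤ → M) : ℤ → M := fun i => x (i - 1)

/-- The metric `d(x,y) = ∑_{n ∈ ℤ} 2^{-|n|} ρ(xₙ,yₙ)/(1 + ρ(xₙ,yₙ))` on `ℤ → M`,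
compatible with the product topology. -/
def shiftDist {M : Type*} [MetricSpace M] (x y : ℤ → M) : ℝ :=
  ∑' n : ℤ, (1 / 2 : ℝ) ^ n.natAbs * (dist (x n) (y n) / (1 + dist (x n) (y n)))

/-- Lower local dimension `d̲_μ(x) = liminf_{ε → 0⁺} log μ(B(x,ε)) / log ε` of `μ` at `x`,
with respect to the distance function `d`; by convention it is `∞` if some ball
centered at `x` has measure zero. -/
def lowerLocalDim {X : Type*} [MeasurableSpace X] (d : X → X → ℝ)
    (μ : Measure X) (x : X) : ℝ≥0∞ :=
  if ∃ ε > 0, μ {y | d x y < ε} = 0 then ⊤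
  else liminf (fun ε : ℝ =>
    ENNReal.ofReal (Real.log (μ {y | d x y < ε}).toReal / Real.log ε)) (𝓝[>] (0 : ℝ))

/-- Upper local dimension `d̄_μ(x) = limsup_{ε → 0⁺} log μ(B(x,ε)) / log ε`. -/
def upperLocalDim {X : Type*} [MeasurableSpace X] (d : X → X → ℝ)
    (μ : Measure X) (x : X) : ℝ≥0∞ :=
  if ∃ ε > 0, μ {y | d x y < ε} = 0 then ⊤
  else limsup (fun ε : ℝ =>
    ENNReal.ofReal (Real.log (μ {y | d x y < ε}).toReal / Real.log ε)) (𝓝[>] (0 : ℝ))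

/-- The ratio `log τ_r(x) / (- log r)`, where `τ_r(x) = inf {n ≥ 1 | Tⁿ x ∈ B̄(x,r)}` is the
first return time of `x` to the closed ball `B̄(x,r)`; by convention it is `∞` when the
return time is infinite. -/
def recRatio {X : Type*} (d : X → X → ℝ) (T : X → X) (x : X) (r : ℝ) : ℝ≥0∞ :=
  if ∃ n : ℕ, 1 ≤ n ∧ d (T^[n] x) x ≤ r then
    ENNReal.ofReal
      (Real.log ((sInf {n : ℕ | 1 ≤ n ∧ d (T^[n] x) x ≤ r} : ℕ) : ℝ) / (- Real.log r))
  else ⊤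

/-- Lower recurrence rate `R̲(x) = liminf_{r → 0⁺} log τ_r(x) / (- log r)`. -/
def lowerRecRate {X : Type*} (d : X → X → ℝ) (T : X → X) (x : X) : ℝ≥0∞ :=
  liminf (recRatio d T x) (𝓝[>] (0 : ℝ))

/-- Upper recurrence rate `R̄(x) = limsup_{r → 0⁺} log τ_r(x) / (- log r)`. -/
def upperRecRate {X : Type*} (d : X → X → ℝ) (T : X → X) (x : X) : ℝ≥0∞ :=
  limsup (recRatio d T x) (𝓝[>] (0 : ℝ))

/-- The ratio `log τ_r(x,y) / (- log r)`, where `τ_r(x,y) = inf {n ≥ 1 | Tⁿ x ∈ B̄(y,r)}` is the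
first entrance time of the orbit of `x` into the closed ball `B̄(y,r)`; by convention `∞`
when the entrance time is infinite. -/
def waitRatio {X : Type*} (d : X → X → ℝ) (T : X → X) (x y : X) (r : ℝ) : ℝ≥0∞ :=
  if ∃ n : ℕ, 1 ≤ n ∧ d (T^[n] x) y ≤ r then
    ENNReal.ofReal
      (Real.log ((sInf {n : ℕ | 1 ≤ n ∧ d (T^[n] x) y ≤ r} : ℕ) : ℝ) / (- Real.log r))
  else ⊤

/-- Lower quantitative waiting time indicator `R̲(x,y)`. -/
def lowerWaitRate {X : Type*} (d : X → X → ℝ) (T : X → X) (x y : X) : ℝ≥0∞ :=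
  liminf (waitRatio d T x y) (𝓝[>] (0 : ℝ))

/-- Upper quantitative waiting time indicator `R̄(x,y)`. -/
def upperWaitRate {X : Type*} (d : X → X → ℝ) (T : X → X) (x y : X) : ℝ≥0∞ :=
  limsup (waitRatio d T x y) (𝓝[>] (0 : ℝ))

/-- The entropy `H(P) = ∑_c -μ(P_c) log μ(P_c)` of the finite measurable partition
`P_c = f ⁻¹ {c}` of `X` induced by a map `f` into a finite set. -/
def partitionEntropy {X F : Type*} [MeasurableSpace X] [Fintype F]
    (μ : Measure X) (f : X → F) : ℝ :=
  ∑ c : F, Real.negMulLog ((μ (f ⁻¹' {c})).toReal)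

/-- The Kolmogorov–Sinai (measure-theoretic) entropy `h_μ(T)`: the supremum, over all finite
measurable partitions (coded by measurable maps `f : X → Fin k`), of the limit of
`H(⋁_{i<n} T⁻ⁱ P) / n`. -/
def kolmogorovSinaiEntropy {X : Type*} [MeasurableSpace X] (T : X → X) (μ : Measure X) :
    ℝ≥0∞ :=
  ⨆ (k : ℕ) (f : X → Fin k) (_ : Measurable f),
    ENNReal.ofReal
      (liminf (fun n : ℕ =>
        partitionEntropy μ (fun x (i : Fin n) => f (T^[(i : ℕ)] x)) / n) atTop)

end

namespace FSE

set_option linter.unusedSectionVars false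

variable {M : Type*} [MetricSpace M] [TopologicalSpace.SeparableSpace M]
    [MeasurableSpace M] [BorelSpace M]

/-- The `a`-th power of the shift. -/
def sh {M : Type*} (a : ℕ) (x : ℤ → M) : ℤ → M := fun i => x (i - a)

theorem continuous_sh (a : ℕ) : Continuous (sh a : (ℤ → M) → (ℤ → M)) := by
  unfold sh; fun_prop

theorem measurable_sh {M : Type*} [MeasurableSpace M] (a : ℕ) :
    Measurable (sh a : (ℤ → M) → (ℤ → M)) := by
  unfold sh; fun_prop

theorem sh_comp {M : Type*} (a b : ℕ) (x : ℤ → M) : sh a (sh b x) = sh (a + b) x := by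
  funext i; simp only [sh]; congr 1; push_cast; ring

theorem sh_one {M : Type*} : (fullShift : (ℤ → M) → (ℤ → M)) = sh 1 := by
  funext x i; simp [sh, fullShift]

theorem sh_zero {M : Type*} (x : ℤ → M) : sh 0 x = x := by
  funext i; simp [sh]

theorem mp_sh {M : Type*} [MeasurableSpace M] {μ : Measure (ℤ → M)} (h : μ.map fullShift = μ)
    (a : ℕ) : MeasurePreserving (sh a) μ μ := by
  induction a with
  | zero =>
    have : (sh 0 : (ℤ → M) → (ℤ → M)) = id := by funext x; exact sh_zero x
    rw [this]; exact MeasurePreserving.id μ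
  | succ a ih =>
    have h1 : MeasurePreserving (sh 1) μ μ := ⟨measurable_sh 1, by rw [← sh_one]; exact h⟩
    have : (sh (a+1) : (ℤ → M) → (ℤ → M)) = sh a ∘ sh 1 := by
      funext x; simp [sh_comp]
    rw [this]; exact ih.comp h1

/-- Birkhoff averages. -/
noncomputable def avg (f : BoundedContinuousFunction (ℤ → M) ℝ) (n : ℕ) :
    BoundedContinuousFunction (ℤ → M) ℝ :=
  (1 / (n : ℝ)) • ∑ a ∈ Finset.range n, f.compContinuous ⟨sh a, continuous_sh a⟩

theorem avg_apply (f : BoundedContinuousFunction (ℤ → M) ℝ) (n : ℕ) (x : ℤ → M) :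
    avg f n x = (1 / (n : ℝ)) * ∑ a ∈ Finset.range n, f (sh a x) := by
  simp [avg]

theorem isOpen_U (f : BoundedContinuousFunction (ℤ → M) ℝ) (ε : ℝ) :
    IsOpen {μ : {ν : ProbabilityMeasure (ℤ → M) // ν.toMeasure.map fullShift = ν.toMeasure} |
      ∃ n : ℕ, 1 ≤ n ∧ ∫ x, (avg f n x) ^ 2 ∂μ.1.toMeasure <
        (∫ x, f x ∂μ.1.toMeasure) ^ 2 + ε} := by
  have : {μ : {ν : ProbabilityMeasure (ℤ → M) // ν.toMeasure.map fullShift = ν.toMeasure} |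
      ∃ n : ℕ, 1 ≤ n ∧ ∫ x, (avg f n x) ^ 2 ∂μ.1.toMeasure <
        (∫ x, f x ∂μ.1.toMeasure) ^ 2 + ε} = ⋃ (n : ℕ) (_ : 1 ≤ n),
        {μ | ∫ x, ((avg f n) ^ 2) x ∂μ.1.toMeasure < (∫ x, f x ∂μ.1.toMeasure) ^ 2 + ε} := by
    ext μ; simp
  rw [this]
  refine isOpen_iUnion fun n => isOpen_iUnion fun _ => isOpen_lt ?_ ?_
  · exact (ProbabilityMeasure.continuous_integral_boundedContinuousFunction
      ((avg f n) ^ 2)).comp continuous_subtype_val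
  · exact ((((ProbabilityMeasure.continuous_integral_boundedContinuousFunction f).comp
      continuous_subtype_val)).pow 2).add continuous_const

theorem setIntegral_eq {μ : Measure (ℤ → M)} [IsProbabilityMeasure μ] (h : μ.map fullShift = μ)
    {A : Set (ℤ → M)} (hA : MeasurableSet A) (hinv : fullShift ⁻¹' A = A)
    (f : BoundedContinuousFunction (ℤ → M) ℝ)
    (hf : ∀ ε > 0, ∃ n : ℕ, 1 ≤ n ∧ ∫ x, (avg f n x) ^ 2 ∂μ < (∫ x, f x ∂μ) ^ 2 + ε) :
    ∫ x in A, f x ∂μ = μ.real A * ∫ x, f x ∂μ := by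
  have hint : ∀ (g : BoundedContinuousFunction (ℤ → M) ℝ), Integrable g μ :=
    fun g => g.integrable μ
  have hinvs : ∀ a, sh a ⁻¹' A = A := by
    intro a
    induction a with
    | zero => ext x; simp [sh_zero]
    | succ a ih =>
      have : (sh (a+1) : (ℤ → M) → (ℤ → M)) = sh a ∘ sh 1 := by
        funext x; simp [sh_comp]
      rw [this, preimage_comp, ih, ← sh_one, hinv]
  have hfi : ∀ a, Integrable (fun x => f (sh a x)) μ := fun a =>
    hint (f.compContinuous ⟨sh a, continuous_sh a⟩)
  have h1 : ∀ a, ∫ x in A, f (sh a x) ∂μ = ∫ x in A, f x ∂μ := by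
    intro a
    have e := (mp_sh h a).restrict_preimage hA
    rw [hinvs] at e
    have e2 := integral_map (μ := μ.restrict A) (measurable_sh a).aemeasurable
      (f := fun x => f x) (f.continuous.measurable.aestronglyMeasurable)
    rw [e.map_eq] at e2
    exact e2.symm
  have h1' : ∀ a, ∫ x, f (sh a x) ∂μ = ∫ x, f x ∂μ := by
    intro a
    have e := (mp_sh h a)
    have e2 := integral_map (μ := μ) (measurable_sh a).aemeasurable
      (f := fun x => f x) (f.continuous.measurable.aestronglyMeasurable)
    rw [e.map_eq] at e2
    exact e2.symm
  set c := ∫ x, f x ∂μ with hc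
  have key : ∀ δ > 0, |∫ x in A, f x ∂μ - μ.real A * c| ≤ δ := by
    intro δ hδ
    obtain ⟨n, hn, hlt⟩ := hf (δ ^ 2) (by positivity)
    have hn0 : (n : ℝ) ≠ 0 := by positivity
    have h2 : ∫ x in A, avg f n x ∂μ = ∫ x in A, f x ∂μ := by
      simp_rw [avg_apply]
      rw [integral_const_mul, integral_finsetSum _ (fun a _ => (hfi a).integrableOn)]
      simp_rw [h1]
      simp; field_simp
    have h2' : ∫ x, avg f n x ∂μ = c := by
      simp_rw [avg_apply]
      rw [integral_const_mul, integral_finsetSum _ (fun a _ => (hfi a))]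
      simp_rw [h1']
      simp; field_simp
    set g := avg f n
    have hg : Integrable g μ := hint g
    have hg2 : Integrable (fun x => g x ^ 2) μ := hint (g ^ 2)
    have h3 : ∫ x in A, f x ∂μ - μ.real A * c = ∫ x in A, (g x - c) ∂μ := by
      rw [integral_sub hg.integrableOn (integrable_const c), h2]; simp
    have hgc2 : Integrable (fun x => (g x - c) ^ 2) μ :=
      hint ((g - BoundedContinuousFunction.const _ c) ^ 2)
    have h4 : ∫ x, (g x - c) ^ 2 ∂μ < δ ^ 2 := by
      have : ∀ x, (g x - c) ^ 2 = g x ^ 2 - 2 * c * g x + c ^ 2 := fun x => by ring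
      simp_rw [this]
      have hs : Integrable (fun x => g x ^ 2 - 2 * c * g x) μ := hg2.sub (hg.const_mul _)
      rw [integral_add hs (integrable_const _), integral_sub hg2 (hg.const_mul _), integral_const_mul, h2']
      simp
      nlinarith
    have hgc : Integrable (fun x => g x - c) μ := hg.sub (integrable_const c)
    rw [h3]
    calc |∫ x in A, (g x - c) ∂μ| ≤ ∫ x in A, |g x - c| ∂μ := abs_integral_le_integral_abs
      _ ≤ ∫ x, |g x - c| ∂μ :=
        setIntegral_le_integral hgc.abs (Eventually.of_forall fun x => abs_nonneg _)
      _ ≤ ∫ x, (δ / 2 + (1 / (2 * δ)) * (g x - c) ^ 2) ∂μ := by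
        refine integral_mono hgc.abs ((integrable_const _).add (hgc2.const_mul _)) fun x => ?_
        have : δ / 2 + (1 / (2 * δ)) * (g x - c) ^ 2 - |g x - c|
          = (1 / (2 * δ)) * (δ - |g x - c|) ^ 2 := by
          rw [← sq_abs (g x - c)]; field_simp; ring
        have h0 : 0 ≤ (1 / (2 * δ)) * (δ - |g x - c|) ^ 2 := by positivity
        simp only; linarith
      _ = δ / 2 + (1 / (2 * δ)) * ∫ x, (g x - c) ^ 2 ∂μ := by
        rw [integral_add (integrable_const _) (hgc2.const_mul _), integral_const_mul]; simp
      _ ≤ δ / 2 + (1 / (2 * δ)) * δ ^ 2 := by gcongr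
      _ = δ := by field_simp; ring
  have : |∫ x in A, f x ∂μ - μ.real A * c| ≤ 0 :=
    le_of_forall_pos_le_add fun δ hδ => by simpa using key δ hδ
  have := abs_nonpos_iff.mp this
  linarith

end FSE
namespace FSE

set_option linter.unusedSectionVars false

variable {M : Type*} [MetricSpace M] [TopologicalSpace.SeparableSpace M]
    [MeasurableSpace M] [BorelSpace M]

theorem isClosed_cb (O : TopologicalSpace.countableBasis M) : IsClosed (O.1)ᶜ :=
  (TopologicalSpace.isOpen_of_mem_countableBasis O.2).isClosed_compl

/-- The test functions: products of finitely many functions of one coordinate. -/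
noncomputable def tf (S : Finset (ℤ × TopologicalSpace.countableBasis M)) (j : ℕ) :
    BoundedContinuousFunction (ℤ → M) ℝ :=
  BoundedContinuousFunction.ofNormedAddCommGroup
    (fun x => ∏ p ∈ S, (((isClosed_cb p.2).apprSeq j (x p.1) : ℝ≥0) : ℝ))
    (by fun_prop) 1
    (by
      intro x
      rw [Real.norm_of_nonneg (Finset.prod_nonneg fun _ _ => NNReal.coe_nonneg _)]
      exact Finset.prod_le_one (fun p _ => NNReal.coe_nonneg _)
        (fun p _ => by exact_mod_cast HasOuterApproxClosed.apprSeq_apply_le_one _ _ _))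

theorem tf_apply (S : Finset (ℤ × TopologicalSpace.countableBasis M)) (j : ℕ) (x : ℤ → M) :
    tf S j x = ∏ p ∈ S, (((isClosed_cb p.2).apprSeq j (x p.1) : ℝ≥0) : ℝ) := rfl

theorem tf_nonneg (S : Finset (ℤ × TopologicalSpace.countableBasis M)) (j : ℕ) (x : ℤ → M) :
    0 ≤ tf S j x := Finset.prod_nonneg fun p _ => NNReal.coe_nonneg _

theorem tf_le_one (S : Finset (ℤ × TopologicalSpace.countableBasis M)) (j : ℕ) (x : ℤ → M) :
    tf S j x ≤ 1 :=
  Finset.prod_le_one (fun p _ => NNReal.coe_nonneg _)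
        (fun p _ => by exact_mod_cast HasOuterApproxClosed.apprSeq_apply_le_one _ _ _)

theorem tf_dep (S : Finset (ℤ × TopologicalSpace.countableBasis M)) (j : ℕ) :
    ∃ m : ℕ, ∀ x y : ℤ → M, (∀ i : ℤ, -m ≤ i → i ≤ m → x i = y i) → tf S j x = tf S j y := by
  refine ⟨S.sup fun p => p.1.natAbs, fun x y h => ?_⟩
  rw [tf_apply, tf_apply]
  refine Finset.prod_congr rfl fun p hp => ?_
  have : p.1.natAbs ≤ S.sup fun p => p.1.natAbs :=
    Finset.le_sup (f := fun p : ℤ × TopologicalSpace.countableBasis M => p.1.natAbs) hp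
  rw [h p.1 (by omega) (by omega)]

/-- closed boxes -/
def box (S : Finset (ℤ × TopologicalSpace.countableBasis M)) : Set (ℤ → M) :=
  {x | ∀ p ∈ S, x p.1 ∈ (p.2.1)ᶜ}

theorem measurableSet_box (S : Finset (ℤ × TopologicalSpace.countableBasis M)) :
    MeasurableSet (box S) := by
  have : box S = ⋂ p ∈ S, (fun x : ℤ → M => x p.1) ⁻¹' (p.2.1)ᶜ := by
    ext x; simp [box]
  rw [this]
  exact Finset.measurableSet_biInter _ fun p _ =>
    (measurable_pi_apply p.1) (isClosed_cb p.2).measurableSet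

theorem tf_tendsto (S : Finset (ℤ × TopologicalSpace.countableBasis M)) (x : ℤ → M) :
    Tendsto (fun j => tf S j x) atTop (𝓝 ((box S).indicator (fun _ => (1 : ℝ)) x)) := by
  have h : Tendsto (fun j => tf S j x) atTop
      (𝓝 (∏ p ∈ S, (((p.2.1)ᶜ.indicator (fun _ => (1 : ℝ≥0)) (x p.1) : ℝ≥0) : ℝ))) := by
    simp_rw [tf_apply]
    refine tendsto_finsetProd _ fun p _ => ?_
    refine (NNReal.continuous_coe.tendsto _).comp ?_
    exact (tendsto_pi_nhds.mp (HasOuterApproxClosed.tendsto_apprSeq (isClosed_cb p.2))) (x p.1)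
  convert h using 2
  by_cases hx : x ∈ box S
  · rw [indicator_of_mem hx, Finset.prod_eq_one]
    intro p hp
    rw [indicator_of_mem (hx p hp)]; simp
  · rw [indicator_of_notMem hx]
    simp only [box, mem_ofPred_eq, not_forall] at hx
    obtain ⟨p, hp, hxp⟩ := hx
    rw [Finset.prod_eq_zero hp]
    rw [indicator_of_notMem hxp]; simp

theorem isPiSystem_box : IsPiSystem (range (box (M := M))) := by
  rintro _ ⟨S, rfl⟩ _ ⟨S', rfl⟩ _
  refine ⟨S ∪ S', ?_⟩
  ext x
  simp only [box, Finset.mem_union, mem_ofPred_eq, mem_inter_iff]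
  constructor
  · exact fun h => ⟨fun p hp => h p (Or.inl hp), fun p hp => h p (Or.inr hp)⟩
  · rintro ⟨h1, h2⟩ p (hp | hp)
    exacts [h1 p hp, h2 p hp]

theorem generate_box :
    (MeasurableSpace.pi : MeasurableSpace (ℤ → M)) =
      MeasurableSpace.generateFrom (range (box (M := M))) := by
  apply le_antisymm
  · refine iSup_le fun i => ?_
    have hM : ‹MeasurableSpace M› =
        MeasurableSpace.generateFrom (TopologicalSpace.countableBasis M) := by
      rw [BorelSpace.measurable_eq (α := M)]
      exact (TopologicalSpace.isBasis_countableBasis M).borel_eq_generateFrom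
    rw [hM, MeasurableSpace.comap_generateFrom]
    refine MeasurableSpace.generateFrom_le ?_
    rintro _ ⟨O, hO, rfl⟩
    rw [← compl_compl ((fun b : ℤ → M => b i) ⁻¹' O)]
    refine MeasurableSet.compl ?_
    apply MeasurableSpace.measurableSet_generateFrom
    refine ⟨{(i, ⟨O, hO⟩)}, ?_⟩
    ext x
    simp [box]
  · refine MeasurableSpace.generateFrom_le ?_
    rintro _ ⟨S, rfl⟩
    exact measurableSet_box S

theorem ergodic_of {μ : Measure (ℤ → M)} [IsProbabilityMeasure μ] (h : μ.map fullShift = μ)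
    (hf : ∀ S j, ∀ ε > 0, ∃ n : ℕ, 1 ≤ n ∧ ∫ x, (avg (tf S j) n x) ^ 2 ∂μ <
      (∫ x, tf S j x ∂μ) ^ 2 + ε) :
    Ergodic fullShift μ := by
  refine { (⟨by rw [sh_one]; exact measurable_sh 1, h⟩ : MeasurePreserving fullShift μ μ),
    (?_ : PreErgodic fullShift μ) with }
  refine ⟨fun A hA hinv => ?_⟩
  have lim : ∀ (ν : Measure (ℤ → M)) [IsFiniteMeasure ν] S,
      Tendsto (fun j => ∫ x, tf S j x ∂ν) atTop (𝓝 (ν.real (box S))) := by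
    intro ν _ S
    have := tendsto_integral_of_dominated_convergence (μ := ν) (fun _ => (1 : ℝ))
      (F := fun j x => tf S j x) (f := (box S).indicator (fun _ => (1 : ℝ)))
      (fun j => (tf S j).continuous.measurable.aestronglyMeasurable) (integrable_const _)
      (fun j => Eventually.of_forall fun x => by
        rw [Real.norm_of_nonneg (tf_nonneg _ _ _)]; exact tf_le_one _ _ _)
      (Eventually.of_forall fun x => tf_tendsto S x)
    rwa [integral_indicator_const _ (measurableSet_box S), smul_eq_mul, mul_one] at this
  have hbox : ∀ S, (μ.restrict A).real (box S) = μ.real A * μ.real (box S) := by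
    intro S
    refine tendsto_nhds_unique (lim (μ.restrict A) S) ?_
    have := (lim μ S).const_mul (μ.real A)
    refine this.congr fun j => ?_
    exact (setIntegral_eq h hA hinv (tf S j) (hf S j)).symm
  have heq : μ.restrict A = μ A • μ := by
    refine ext_of_generate_finite _ generate_box isPiSystem_box ?_ (by simp)
    rintro _ ⟨S, rfl⟩
    have := hbox S
    rw [← ENNReal.toReal_eq_toReal_iff' (measure_ne_top _ _)
      (by simp [ENNReal.mul_eq_top])]
    simpa [Measure.real, ENNReal.toReal_mul] using this
  have h2 : μ A = μ A * μ A := by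
    have := congrArg (fun ν : Measure (ℤ → M) => ν A) heq
    simpa using this
  rw [eventuallyConst_set']
  rcases eq_or_ne (μ A) 0 with h0 | h0
  · left; exact ae_eq_empty.mpr h0
  · right
    have h1 : μ A = 1 := by
      have := (ENNReal.mul_right_inj h0 (measure_ne_top μ A)).mp
        (show μ A * 1 = μ A * μ A by rw [mul_one]; exact h2)
      exact this.symm
    exact eventuallyEq_univ.mpr ((prob_compl_eq_zero_iff hA).mpr h1)

end FSE
namespace FSE

set_option linter.unusedSectionVars false

variable {M : Type*} [MetricSpace M] [TopologicalSpace.SeparableSpace M]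
    [MeasurableSpace M] [BorelSpace M]

/-- Glue blocks of length `N`. -/
def gl {M : Type*} (N : ℕ) (ω : ℤ → (ℤ → M)) : ℤ → M :=
  fun i => ω ((-i) / N) (-((-i) % N))

theorem measurable_gl {M : Type*} [MeasurableSpace M] (N : ℕ) :
    Measurable (gl N : (ℤ → (ℤ → M)) → (ℤ → M)) := by
  refine measurable_pi_lambda _ fun i => ?_
  unfold gl
  fun_prop

theorem sh_gl {M : Type*} (N : ℕ) (hN : 0 < N) (ω : ℤ → (ℤ → M)) :
    sh N (gl N ω) = gl N (fun k => ω (k + 1)) := by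
  funext i
  simp only [sh, gl]
  have hN' : (N : ℤ) ≠ 0 := by omega
  have h1 : -(i - (N : ℤ)) = -i + N := by ring
  rw [h1, Int.add_ediv_of_dvd_right (dvd_refl _), Int.ediv_self hN', Int.add_emod_right]

/-- The law of an independent concatenation of `N`-blocks. -/
noncomputable def hatm {M : Type*} [MeasurableSpace M] (μ : Measure (ℤ → M)) (N : ℕ) :
    Measure (ℤ → M) :=
  (Measure.infinitePi (fun _ : ℤ => μ)).map (gl N)

instance {M : Type*} [MeasurableSpace M] (μ : Measure (ℤ → M)) [IsProbabilityMeasure μ] (N : ℕ) :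
    IsProbabilityMeasure (hatm μ N) :=
  Measure.isProbabilityMeasure_map (measurable_gl N).aemeasurable

theorem hatm_inv {M : Type*} [MeasurableSpace M] (μ : Measure (ℤ → M)) [IsProbabilityMeasure μ]
    (N : ℕ) (hN : 0 < N) : (hatm μ N).map (sh N) = hatm μ N := by
  have h := Measure.map_infinitePi_infinitePi_of_inj (P := fun _ : ℤ => μ)
    (f := fun k : ℤ => k + 1) (add_left_injective 1)
  have hm : Measurable (fun (ω : ℤ → (ℤ → M)) (k : ℤ) => ω (k + 1)) := by fun_prop
  unfold hatm
  rw [Measure.map_map (measurable_sh N) (measurable_gl N)]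
  have : sh N ∘ gl N = gl N ∘ (fun (ω : ℤ → (ℤ → M)) (k : ℤ) => ω (k + 1)) := by
    funext ω; exact sh_gl N hN ω
  rw [this, ← Measure.map_map (measurable_gl N) hm, h]

/-- The invariant measure approximating `μ`. -/
noncomputable def num {M : Type*} [MeasurableSpace M] (μ : Measure (ℤ → M)) (N : ℕ) :
    Measure (ℤ → M) :=
  (N : ℝ≥0∞)⁻¹ • ∑ r ∈ Finset.range N, (hatm μ N).map (sh r)

theorem num_prob {M : Type*} [MeasurableSpace M] (μ : Measure (ℤ → M)) [IsProbabilityMeasure μ]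
    (N : ℕ) (hN : 0 < N) : IsProbabilityMeasure (num μ N) := by
  constructor
  have : ∀ r, ((hatm μ N).map (sh r)) univ = 1 := fun r =>
    (Measure.isProbabilityMeasure_map (measurable_sh r).aemeasurable).measure_univ
  simp only [num, Measure.smul_apply, Measure.finsetSum_apply, this]
  simp only [Finset.sum_const, Finset.card_range, nsmul_eq_mul, mul_one, smul_eq_mul]
  exact ENNReal.inv_mul_cancel (by simp; omega) (by simp)

theorem num_inv {M : Type*} [MeasurableSpace M] (μ : Measure (ℤ → M)) [IsProbabilityMeasure μ]
    (N : ℕ) (hN : 0 < N) : (num μ N).map fullShift = num μ N := by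
  have h1 : ∀ r, ((hatm μ N).map (sh r)).map (sh 1) = (hatm μ N).map (sh (r + 1)) := by
    intro r
    rw [Measure.map_map (measurable_sh 1) (measurable_sh r)]
    congr 1
    funext x
    simp [sh_comp, add_comm]
  have h0 : (hatm μ N).map (sh 0) = hatm μ N := by
    have : (sh 0 : (ℤ → M) → (ℤ → M)) = id := by funext x; exact sh_zero x
    rw [this, Measure.map_id]
  rw [sh_one]
  ext s hs
  rw [Measure.map_apply (measurable_sh 1) hs]
  simp only [num, Measure.smul_apply, Measure.finsetSum_apply]
  congr 1
  have h2 : ∀ r, ((hatm μ N).map (sh r)) (sh 1 ⁻¹' s) = ((hatm μ N).map (sh (r + 1))) s := by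
    intro r
    rw [← h1, Measure.map_apply (measurable_sh 1) hs]
  simp_rw [h2]
  have e1 := Finset.sum_range_succ (fun r => ((hatm μ N).map (sh r)) s) N
  have e2 := Finset.sum_range_succ' (fun r => ((hatm μ N).map (sh r)) s) N
  rw [hatm_inv μ N hN] at e1
  rw [h0] at e2
  rw [e1] at e2
  exact ((ENNReal.add_left_inj (measure_ne_top _ _)).mp e2).symm

theorem integral_num (μ : Measure (ℤ → M)) [IsProbabilityMeasure μ] (N : ℕ)
    (g : BoundedContinuousFunction (ℤ → M) ℝ) :
    ∫ x, g x ∂(num μ N) = (N : ℝ)⁻¹ * ∑ r ∈ Finset.range N, ∫ x, g (sh r x) ∂(hatm μ N) := by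
  have hp : ∀ r, IsProbabilityMeasure ((hatm μ N).map (sh r)) := fun r =>
    (Measure.isProbabilityMeasure_map (measurable_sh r).aemeasurable)
  rw [num, integral_smul_measure, integral_finsetSum_measure (fun r _ => g.integrable _)]
  simp only [ENNReal.toReal_inv, ENNReal.toReal_natCast, smul_eq_mul]
  congr 1
  refine Finset.sum_congr rfl fun r _ => ?_
  exact integral_map (measurable_sh r).aemeasurable g.continuous.measurable.aestronglyMeasurable

/-- Sums of a periodic sequence over a period. -/
theorem sum_per (c : ℕ → ℝ) (N : ℕ) (hc : ∀ a, c (a + N) = c a) (r : ℕ) :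
    ∑ a ∈ Finset.range N, c (a + r) = ∑ a ∈ Finset.range N, c a := by
  induction r with
  | zero => simp
  | succ r ih =>
    have e1 := Finset.sum_range_succ (fun a => c (a + r)) N
    have e2 := Finset.sum_range_succ' (fun a => c (a + r)) N
    have h3 := hc r
    rw [add_comm] at h3
    rw [← ih]
    simp only [zero_add] at e2
    have : ∀ a, a + 1 + r = a + (r + 1) := fun a => by ring
    simp only [this] at e2
    linarith

theorem sum_per_mul (c : ℕ → ℝ) (N : ℕ) (hc : ∀ a, c (a + N) = c a) (r L : ℕ) :
    ∑ a ∈ Finset.range (N * L), c (a + r) = L * ∑ a ∈ Finset.range N, c a := by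
  induction L with
  | zero => simp
  | succ L ih =>
    rw [Nat.mul_succ, Finset.sum_range_add, ih]
    have : ∀ x, N * L + x + r = x + (N * L + r) := fun x => by ring
    simp only [this]
    rw [sum_per c N hc]
    push_cast; ring

/-- Functions of disjoint coordinate windows far apart are uncorrelated. -/
theorem uncorr (μ : Measure (ℤ → M)) [IsProbabilityMeasure μ] (N : ℕ) (hN : 0 < N)
    (f : BoundedContinuousFunction (ℤ → M) ℝ) (m : ℕ)
    (hf : ∀ x y : ℤ → M, (∀ i : ℤ, -m ≤ i → i ≤ m → x i = y i) → f x = f y)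
    (a b : ℕ) (hab : a + (2 * m + 1 + N) ≤ b) :
    ∫ x, f (sh a x) * f (sh b x) ∂(hatm μ N) =
      (∫ x, f (sh a x) ∂(hatm μ N)) * ∫ x, f (sh b x) ∂(hatm μ N) := by
  classical
  have hX : Nonempty (ℤ → M) := nonempty_of_isProbabilityMeasure μ
  obtain ⟨x0⟩ := hX
  have hfm : ∀ a, Measurable (fun x => f (sh a x)) := fun a =>
    f.continuous.measurable.comp (measurable_sh a)
  let I : ℕ → Finset ℤ := fun a =>
    (Finset.Icc (-(m : ℤ) - a) (m - a)).image (fun i => (-i) / (N : ℤ))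
  have hdisj : Disjoint (I a) (I b) := by
    rw [Finset.disjoint_left]
    intro k hk hk'
    simp only [I, Finset.mem_image, Finset.mem_Icc] at hk hk'
    obtain ⟨i, ⟨hi1, hi2⟩, rfl⟩ := hk
    obtain ⟨j, ⟨hj1, hj2⟩, hij⟩ := hk'
    have hN' : (0 : ℤ) < N := by exact_mod_cast hN
    have e1 := Int.emod_add_mul_ediv (-i) N
    have e2 := Int.emod_add_mul_ediv (-j) N
    have e3 := Int.emod_lt_of_pos (-j) hN'
    have e4 := Int.emod_nonneg (-i) hN'.ne'
    rw [hij] at e2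
    have : ((a + (2 * m + 1 + N) : ℕ) : ℤ) ≤ b := by exact_mod_cast hab
    push_cast at this
    linarith
  have hind := (ProbabilityTheory.iIndepFun_infinitePi (P := fun _ : ℤ => μ)
    (X := fun _ x => x) (fun _ => measurable_id)).indepFun_finset (I a) (I b) hdisj
    (fun i => measurable_pi_apply i)
  let ext : (J : Finset ℤ) → (J → (ℤ → M)) → ℤ → (ℤ → M) := fun J u k =>
    if h : k ∈ J then u ⟨k, h⟩ else x0
  have hext : ∀ J, Measurable (ext J) := by
    intro J
    refine measurable_pi_lambda _ fun k => ?_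
    by_cases h : k ∈ J
    · simp only [ext, h, dif_pos]; exact measurable_pi_apply _
    · simp only [ext, h, dif_neg, not_false_iff]; exact measurable_const
  have hfac : ∀ a (ω : ℤ → (ℤ → M)),
      f (sh a (gl N ω)) = f (sh a (gl N (ext (I a) (fun i : I a => ω i)))) := by
    intro a ω
    apply hf
    intro i h1 h2
    simp only [sh, gl]
    have : (-(i - (a : ℤ))) / (N : ℤ) ∈ I a := by
      simp only [I, Finset.mem_image, Finset.mem_Icc]
      exact ⟨i - a, ⟨by linarith, by linarith⟩, rfl⟩
    simp only [ext, this, dif_pos]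
  have hint : ∀ (g : (ℤ → M) → ℝ), Measurable g →
      ∫ x, g x ∂(hatm μ N) = ∫ ω, g (gl N ω) ∂(Measure.infinitePi (fun _ : ℤ => μ)) :=
    fun g hg => integral_map (measurable_gl N).aemeasurable hg.aestronglyMeasurable
  rw [hint (fun x => f (sh a x) * f (sh b x)) ((hfm a).mul (hfm b)), hint _ (hfm a), hint _ (hfm b)]
  have hG : ∀ a, Measurable (fun u : I a → (ℤ → M) => f (sh a (gl N (ext (I a) u)))) := fun a =>
    (hfm a).comp ((measurable_gl N).comp (hext (I a)))
  have hind2 := hind.comp (hG a) (hG b)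
  have := hind2.integral_fun_mul_eq_mul_integral
    (((hG a).comp (by fun_prop)).aestronglyMeasurable)
    (((hG b).comp (by fun_prop)).aestronglyMeasurable)
  simp only [Function.comp_def, ← hfac] at this
  exact this

end FSE
namespace FSE

set_option linter.unusedSectionVars false

variable {M : Type*} [MetricSpace M] [TopologicalSpace.SeparableSpace M]
    [MeasurableSpace M] [BorelSpace M]

theorem card_near (n D a : ℕ) :
    ((Finset.range n).filter (fun b => ¬ (a + D ≤ b ∨ b + D ≤ a))).card ≤ 2 * D := by
  calc _ ≤ (Finset.Ico (a - D) (a + D)).card := by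
        refine Finset.card_le_card fun b hb => ?_
        simp only [Finset.mem_filter, Finset.mem_range, Finset.mem_Ico] at hb ⊢
        omega
    _ ≤ 2 * D := by rw [Nat.card_Ico]; omega

theorem var_small (μ : Measure (ℤ → M)) [IsProbabilityMeasure μ] (N : ℕ) (hN : 0 < N)
    (f : BoundedContinuousFunction (ℤ → M) ℝ) (h0 : ∀ x, 0 ≤ f x) (h1 : ∀ x, f x ≤ 1)
    (hdep : ∃ m : ℕ, ∀ x y : ℤ → M, (∀ i : ℤ, -m ≤ i → i ≤ m → x i = y i) → f x = f y)
    (ε : ℝ) (hε : 0 < ε) :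
    ∃ n : ℕ, 1 ≤ n ∧ ∫ x, (avg f n x) ^ 2 ∂(num μ N) < (∫ x, f x ∂(num μ N)) ^ 2 + ε := by
  obtain ⟨m, hf⟩ := hdep
  set D := 2 * m + 1 + N with hD
  set c : ℕ → ℝ := fun a => ∫ x, f (sh a x) ∂(hatm μ N) with hc
  have hfm : ∀ a, Measurable (fun x => f (sh a x)) := fun a =>
    f.continuous.measurable.comp (measurable_sh a)
  have hper : ∀ a, c (a + N) = c a := by
    intro a
    have e := integral_map (μ := hatm μ N) (measurable_sh N).aemeasurable
      (f := fun x => f (sh a x)) (hfm a).aestronglyMeasurable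
    rw [hatm_inv μ N hN] at e
    simp only [sh_comp] at e
    exact e.symm
  have hc0 : ∀ a, 0 ≤ c a := fun a => integral_nonneg fun x => h0 _
  have hNR : (0 : ℝ) < N := by exact_mod_cast hN
  have hmean : ∫ x, f x ∂(num μ N) = (N : ℝ)⁻¹ * ∑ r ∈ Finset.range N, c r := integral_num μ N f
  set κ := ∫ x, f x ∂(num μ N) with hκ
  have hsum : ∑ r ∈ Finset.range N, c r = N * κ := by rw [hmean]; field_simp
  obtain ⟨L, hL⟩ := exists_nat_gt (2 * D / ε)
  have hLpos : (0 : ℝ) < L := lt_of_le_of_lt (by positivity) hL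
  have hLpos' : 0 < L := by exact_mod_cast hLpos
  have hn : 0 < N * L := Nat.mul_pos hN hLpos'
  refine ⟨N * L, hn, ?_⟩
  set n := N * L with hnn
  have hnR : (0 : ℝ) < n := by exact_mod_cast hn
  have hcorr : ∀ a b, (∫ x, f (sh a x) * f (sh b x) ∂(hatm μ N)) ≤
      c a * c b + if ¬ (a + D ≤ b ∨ b + D ≤ a) then 1 else 0 := by
    intro a b
    by_cases h : a + D ≤ b ∨ b + D ≤ a
    · rw [if_neg (not_not.mpr h), add_zero]
      rcases h with h | h
      · exact (uncorr μ N hN f m hf a b h).le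
      · have := uncorr μ N hN f m hf b a h
        simp_rw [mul_comm (f (sh a _))]
        rw [mul_comm (c a)]
        exact this.le
    · rw [if_pos h]
      have hle : (∫ x, f (sh a x) * f (sh b x) ∂(hatm μ N)) ≤ ∫ x, (1 : ℝ) ∂(hatm μ N) := by
        refine integral_mono
          (((f.compContinuous ⟨sh a, continuous_sh a⟩) *
            (f.compContinuous ⟨sh b, continuous_sh b⟩)).integrable _) (integrable_const _)
          fun x => mul_le_one₀ (h1 _) (h0 _) (h1 _)
      have : (∫ x, (1 : ℝ) ∂(hatm μ N)) = 1 := by simp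
      nlinarith [hc0 a, hc0 b, mul_nonneg (hc0 a) (hc0 b)]
  have hr : ∀ r, (∫ x, ((avg f n) ^ 2) (sh r x) ∂(hatm μ N)) ≤ κ ^ 2 + 2 * D / n := by
    intro r
    have e : ∀ x, ((avg f n) ^ 2) (sh r x) = (1 / (n : ℝ)) ^ 2 *
        ∑ a ∈ Finset.range n, ∑ b ∈ Finset.range n, f (sh (a + r) x) * f (sh (b + r) x) := by
      intro x
      rw [BoundedContinuousFunction.pow_apply, avg_apply, mul_pow, sq (∑ a ∈ _, _),
        Finset.sum_mul_sum]
      simp only [sh_comp]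
    simp_rw [e]
    have hi : ∀ a b, Integrable (fun x => f (sh (a + r) x) * f (sh (b + r) x)) (hatm μ N) :=
      fun a b => ((f.compContinuous ⟨sh (a + r), continuous_sh _⟩) *
            (f.compContinuous ⟨sh (b + r), continuous_sh _⟩)).integrable _
    rw [integral_const_mul, integral_finsetSum _ (fun a _ => integrable_finsetSum _
      (fun b _ => hi a b))]
    simp_rw [fun a => integral_finsetSum (μ := hatm μ N) (Finset.range n)
      (fun b _ => hi a b)]
    have hs : ∑ a ∈ Finset.range n, c (a + r) = n * κ := by
      rw [hnn, sum_per_mul c N hper r L, hsum]; push_cast; ring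
    have bound : ∑ a ∈ Finset.range n, ∑ b ∈ Finset.range n,
        (∫ x, f (sh (a + r) x) * f (sh (b + r) x) ∂(hatm μ N)) ≤
        (n * κ) ^ 2 + n * (2 * D) := by
      calc _ ≤ ∑ a ∈ Finset.range n, ∑ b ∈ Finset.range n, (c (a + r) * c (b + r) +
            if ¬ (a + D ≤ b ∨ b + D ≤ a) then 1 else 0) := by
            refine Finset.sum_le_sum fun a _ => Finset.sum_le_sum fun b _ => ?_
            refine (hcorr (a + r) (b + r)).trans (le_of_eq ?_)
            congr 1
            have : (a + r + D ≤ b + r ∨ b + r + D ≤ a + r) ↔ (a + D ≤ b ∨ b + D ≤ a) := by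
              omega
            simp only [this]
        _ = (n * κ) ^ 2 + ∑ a ∈ Finset.range n,
            (((Finset.range n).filter (fun b => ¬ (a + D ≤ b ∨ b + D ≤ a))).card : ℝ) := by
            simp_rw [Finset.sum_add_distrib]
            rw [← Finset.sum_mul_sum, hs, sq]
            congr 1
            refine Finset.sum_congr rfl fun a _ => ?_
            rw [Finset.sum_ite, Finset.sum_const_zero, add_zero, Finset.sum_const, nsmul_eq_mul,
              mul_one]
        _ ≤ (n * κ) ^ 2 + ∑ a ∈ Finset.range n, (2 * D : ℝ) := by
            gcongr with a _
            exact_mod_cast card_near n D a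
        _ = _ := by rw [Finset.sum_const, Finset.card_range, nsmul_eq_mul]
    calc _ ≤ (1 / (n : ℝ)) ^ 2 * ((n * κ) ^ 2 + n * (2 * D)) := by gcongr
      _ = _ := by field_simp
  have hfin : ∫ x, ((avg f n) ^ 2) x ∂(num μ N) ≤ κ ^ 2 + 2 * D / n := by
    rw [integral_num]
    calc _ ≤ (N : ℝ)⁻¹ * ∑ r ∈ Finset.range N, (κ ^ 2 + 2 * D / n) := by
          gcongr with r _
          exact hr r
      _ = _ := by rw [Finset.sum_const, Finset.card_range, nsmul_eq_mul]; field_simp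
  refine lt_of_le_of_lt hfin ?_
  have : 2 * (D : ℝ) / n < ε := by
    rw [div_lt_iff₀ hε] at hL
    rw [div_lt_iff₀ hnR]
    have : (L : ℝ) ≤ n := by
      rw [hnn]; exact_mod_cast Nat.le_mul_of_pos_left L hN
    nlinarith
  linarith

/-- Lower bound for cylinder sets. -/
theorem num_cyl (μ : Measure (ℤ → M)) [IsProbabilityMeasure μ] (hμ : μ.map fullShift = μ)
    (N : ℕ) (C : Set (ℤ → M)) (hC : MeasurableSet C) (m : ℕ)
    (hdep : ∀ x y : ℤ → M, (∀ i : ℤ, -m ≤ i → i ≤ m → x i = y i) → x ∈ C → y ∈ C) :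
    (N : ℝ≥0∞)⁻¹ * (((N - 2 * m : ℕ) : ℝ≥0∞) * μ C) ≤ num μ N C := by
  simp only [num, Measure.smul_apply, Measure.finsetSum_apply, smul_eq_mul]
  gcongr
  have key : ∀ r ∈ Finset.Ico m (N - m), ((hatm μ N).map (sh r)) C = μ C := by
    intro r hr
    rw [Finset.mem_Ico] at hr
    rw [hatm, Measure.map_map (measurable_sh r) (measurable_gl N),
      Measure.map_apply ((measurable_sh r).comp (measurable_gl N)) hC]
    have hag : ∀ (ω : ℤ → (ℤ → M)) (i : ℤ), -m ≤ i → i ≤ m →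
        sh r (gl N ω) i = sh r (ω 0) i := by
      intro ω i h1 h2
      simp only [sh, gl]
      rw [Int.ediv_eq_zero_of_lt (by omega) (by omega), Int.emod_eq_of_lt (by omega) (by omega),
        neg_neg]
    have : (sh r ∘ gl N) ⁻¹' C = (fun ω : ℤ → (ℤ → M) => ω 0) ⁻¹' (sh r ⁻¹' C) := by
      ext ω
      simp only [mem_preimage, Function.comp_apply]
      exact ⟨fun h => hdep _ _ (fun i h1 h2 => hag ω i h1 h2) h,
        fun h => hdep _ _ (fun i h1 h2 => (hag ω i h1 h2).symm) h⟩
    rw [this, ← Measure.map_apply (measurable_pi_apply 0) (measurable_sh r hC),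
      Measure.infinitePi_map_eval (fun _ : ℤ => μ) 0]
    exact (mp_sh hμ r).measure_preimage hC.nullMeasurableSet
  calc ((N - 2 * m : ℕ) : ℝ≥0∞) * μ C
      = ∑ r ∈ Finset.Ico m (N - m), ((hatm μ N).map (sh r)) C := by
        rw [Finset.sum_congr rfl key, Finset.sum_const, Nat.card_Ico, nsmul_eq_mul]
        congr 2; omega
    _ ≤ _ := by
        refine Finset.sum_le_sum_of_subset fun r hr => ?_
        simp only [Finset.mem_Ico, Finset.mem_range] at hr ⊢
        omega

theorem tendsto_ratio (m : ℕ) :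
    Tendsto (fun k : ℕ => ((k + 1 : ℕ) : ℝ≥0∞)⁻¹ * ((k + 1 - 2 * m : ℕ) : ℝ≥0∞)) atTop (𝓝 1) := by
  have h : Tendsto (fun k : ℕ => 1 - (2 * m : ℝ) / ((k : ℝ) + 1)) atTop (𝓝 1) := by
    have := (tendsto_const_div_atTop_nhds_zero_nat (2 * m : ℝ)).comp (tendsto_add_atTop_nat 1)
    have := this.const_sub 1
    simpa [Function.comp_def] using this
  have h2 := (ENNReal.continuous_ofReal.tendsto 1).comp h
  rw [ENNReal.ofReal_one] at h2
  refine h2.congr' ?_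
  filter_upwards [eventually_ge_atTop (2 * m)] with k hk
  simp only [Function.comp_apply]
  have hk1 : (0 : ℝ) < k + 1 := by positivity
  have e : 1 - (2 * m : ℝ) / ((k : ℝ) + 1) = ((k + 1 : ℕ) : ℝ)⁻¹ * ((k + 1 - 2 * m : ℕ) : ℝ) := by
    rw [Nat.cast_sub (by omega)]; push_cast; field_simp
  rw [e, ENNReal.ofReal_mul (by positivity), ENNReal.ofReal_inv_of_pos (by positivity),
    ENNReal.ofReal_natCast, ENNReal.ofReal_natCast]

theorem liminf_cyl (μ : Measure (ℤ → M)) [IsProbabilityMeasure μ] (hμ : μ.map fullShift = μ)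
    (C : Set (ℤ → M)) (hC : MeasurableSet C) (m : ℕ)
    (hdep : ∀ x y : ℤ → M, (∀ i : ℤ, -m ≤ i → i ≤ m → x i = y i) → x ∈ C → y ∈ C) :
    μ C ≤ liminf (fun k : ℕ => num μ (k + 1) C) atTop := by
  have h1 : Tendsto (fun k : ℕ => ((k + 1 : ℕ) : ℝ≥0∞)⁻¹ * (((k + 1 - 2 * m : ℕ) : ℝ≥0∞) * μ C))
      atTop (𝓝 (μ C)) := by
    have := ENNReal.Tendsto.mul_const (b := μ C) (tendsto_ratio m) (Or.inl one_ne_zero)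
    simpa [mul_assoc] using this
  rw [← h1.liminf_eq]
  exact liminf_le_liminf (Eventually.of_forall fun k => num_cyl μ hμ (k + 1) C hC m hdep)

/-- Open sets are increasing unions of open cylinder sets. -/
theorem open_cyl (G : Set (ℤ → M)) (hG : IsOpen G) :
    ∃ C : ℕ → Set (ℤ → M), (∀ m, IsOpen (C m)) ∧ (⋃ m, C m) = G ∧
      ∀ m : ℕ, ∀ x y : ℤ → M, (∀ i : ℤ, -m ≤ i → i ≤ m → x i = y i) → x ∈ C m → y ∈ C m := by
  let π : (m : ℕ) → (ℤ → M) → ((Finset.Icc (-(m : ℤ)) m : Finset ℤ) → M) := fun m x i => x i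
  have hπ : ∀ m, Continuous (π m) := fun m => by fun_prop
  let O : (m : ℕ) → Set ((Finset.Icc (-(m : ℤ)) m : Finset ℤ) → M) := fun m =>
    interior {y | ∀ x, π m x = y → x ∈ G}
  refine ⟨fun m => π m ⁻¹' O m, fun m => isOpen_interior.preimage (hπ m), ?_, ?_⟩
  · apply Subset.antisymm
    · refine iUnion_subset fun m x hx => ?_
      exact (interior_subset hx : _) x rfl
    · intro x hx
      obtain ⟨I, u, hu, hsub⟩ := isOpen_pi_iff.mp hG x hx
      let m := I.sup Int.natAbs
      have hm : ∀ i ∈ I, i ∈ Finset.Icc (-(m : ℤ)) m := by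
        intro i hi
        have : i.natAbs ≤ m := Finset.le_sup (f := Int.natAbs) hi
        rw [Finset.mem_Icc]; omega
      refine mem_iUnion.mpr ⟨m, ?_⟩
      refine mem_interior.mpr ⟨⋂ i ∈ I.attach, {y | y ⟨i.1, hm i.1 i.2⟩ ∈ u i.1}, ?_, ?_, ?_⟩
      · intro y hy z hz
        apply hsub
        intro i hi
        have := mem_iInter₂.mp hy ⟨i, hi⟩ (Finset.mem_attach _ _)
        rw [← hz] at this
        exact this
      · refine isOpen_biInter_finset fun i _ => ?_
        have hcont : Continuous (fun y : (Finset.Icc (-(m : ℤ)) m : Finset ℤ) → M =>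
          y ⟨i.1, hm i.1 i.2⟩) := continuous_apply _
        exact (hu i.1 i.2).1.preimage hcont
      · refine mem_iInter₂.mpr fun i _ => ?_
        exact (hu i.1 i.2).2
  · intro m x y hxy hx
    have : π m y = π m x := by
      funext i
      have := Finset.mem_Icc.mp i.2
      exact (hxy i this.1 this.2).symm
    simp only [mem_preimage, this]
    exact hx

theorem liminf_open (μ : Measure (ℤ → M)) [IsProbabilityMeasure μ] (hμ : μ.map fullShift = μ)
    (G : Set (ℤ → M)) (hG : IsOpen G) :
    μ G ≤ liminf (fun k : ℕ => num μ (k + 1) G) atTop := by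
  obtain ⟨C, hCo, hCG, hdep⟩ := open_cyl G hG
  conv_lhs => rw [← hCG, measure_iUnion_eq_iSup_accumulate]
  refine iSup_le fun m => ?_
  have hm : MeasurableSet (accumulate C m) := by
    rw [accumulate_def]
    exact MeasurableSet.biUnion (Set.to_countable _) fun i _ => (hCo i).measurableSet
  refine (liminf_cyl μ hμ (accumulate C m) hm m ?_).trans ?_
  · intro x y hxy hx
    rw [mem_accumulate] at hx ⊢
    obtain ⟨j, hj, hxj⟩ := hx
    exact ⟨j, hj, hdep j x y (fun i h1 h2 => hxy i (by omega) (by omega)) hxj⟩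
  · refine liminf_le_liminf (Eventually.of_forall fun k => measure_mono ?_)
    rw [← hCG]
    exact accumulate_subset_iUnion m

end FSE
/-- For the full shift `T` on `X = ∏_{n ∈ ℤ} M` over a perfect Polish metric
space `M`, the set of ergodic `T`-invariant Borel probability measures is residual in the
space `M(T)` of `T`-invariant Borel probability measures with the weak topology. -/
theorem fullShift_ergodic_residual {M : Type*} [MetricSpace M] [CompleteSpace M]
    [TopologicalSpace.SeparableSpace M] [PerfectSpace M]
    [MeasurableSpace M] [BorelSpace M] :
    {μ : {ν : ProbabilityMeasure (ℤ → M) // ν.toMeasure.map fullShift = ν.toMeasure} |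
        Ergodic fullShift μ.1.toMeasure} ∈
      residual {ν : ProbabilityMeasure (ℤ → M) // ν.toMeasure.map fullShift = ν.toMeasure} := by
  have key : ∀ p : (Finset (ℤ × TopologicalSpace.countableBasis M) × ℕ) × ℕ,
      {μ : {ν : ProbabilityMeasure (ℤ → M) // ν.toMeasure.map fullShift = ν.toMeasure} |
        ∃ n : ℕ, 1 ≤ n ∧ ∫ x, (FSE.avg (FSE.tf p.1.1 p.1.2) n x) ^ 2 ∂μ.1.toMeasure <
          (∫ x, FSE.tf p.1.1 p.1.2 x ∂μ.1.toMeasure) ^ 2 + 1 / ((p.2 : ℝ) + 1)} ∈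
      residual {ν : ProbabilityMeasure (ℤ → M) //
        ν.toMeasure.map fullShift = ν.toMeasure} := by
    intro p
    refine residual_of_dense_open (FSE.isOpen_U _ _) fun μ => ?_
    let ν : ℕ → {ν : ProbabilityMeasure (ℤ → M) // ν.toMeasure.map fullShift = ν.toMeasure} :=
      fun k => ⟨⟨FSE.num μ.1.toMeasure (k + 1),
        FSE.num_prob _ _ (Nat.succ_pos k)⟩, FSE.num_inv _ _ (Nat.succ_pos k)⟩
    have hν : Tendsto ν atTop (𝓝 μ) := by
      rw [tendsto_subtype_rng]
      exact tendsto_of_forall_isOpen_le_liminf' fun G hG =>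
        FSE.liminf_open μ.1.toMeasure μ.2 G hG
    refine mem_closure_of_tendsto hν (Eventually.of_forall fun k => ?_)
    exact FSE.var_small μ.1.toMeasure (k + 1) (Nat.succ_pos k) (FSE.tf p.1.1 p.1.2)
      (FSE.tf_nonneg _ _) (FSE.tf_le_one _ _) (FSE.tf_dep _ _) _ (by positivity)
  have hcount : Countable (TopologicalSpace.countableBasis M) :=
    (TopologicalSpace.countable_countableBasis M).to_subtype
  filter_upwards [countable_iInter_mem.mpr key] with μ hμ
  refine FSE.ergodic_of μ.2 fun S j ε hε => ?_
  obtain ⟨k, hk⟩ := exists_nat_one_div_lt hε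
  obtain ⟨n, hn, hlt⟩ := mem_iInter.mp hμ ((S, j), k)
  exact ⟨n, hn, hlt.trans (by simpa using hk)⟩
end

section
/- For the full shift T on X = ∏_{n∈ℤ} M over a perfect Polish metric space M, the set HD = {μ ∈ M(T) : d̲_μ(x) = 0 for μ-a.e. x ∈ X} (equivalently, the set of μ with Hausdorff dimension dim_H(μ) = 0) is a dense Gδ subset of M(T). -/
open Filter MeasureTheory Topology Metric Set
open scoped ENNReal NNReal

noncomputable section
attribute [local instance] Classical.propDecidable

end


namespace ShiftHD

section dist
variable {M : Type*} [MetricSpace M]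

/-- One term of the shift metric. -/
noncomputable def term (x y : ℤ → M) (n : ℤ) : ℝ :=
  (1 / 2 : ℝ) ^ n.natAbs * (dist (x n) (y n) / (1 + dist (x n) (y n)))

theorem summable_half : Summable (fun n : ℤ => (1 / 2 : ℝ) ^ n.natAbs) := by
  apply Summable.of_nat_of_neg
  · simpa using summable_geometric_two
  · simpa using summable_geometric_two

theorem frac_bound (t : ℝ) (ht : 0 ≤ t) : 0 ≤ t / (1 + t) ∧ t / (1 + t) ≤ 1 := by
  refine ⟨by positivity, ?_⟩
  rw [div_le_one (by linarith)]
  linarith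

theorem frac_tri {a b c : ℝ} (ha : 0 ≤ a) (hb : 0 ≤ b) (hc : 0 ≤ c) (h : a ≤ b + c) :
    a / (1 + a) ≤ b / (1 + b) + c / (1 + c) := by
  rw [div_add_div _ _ (by positivity) (by positivity), div_le_div_iff₀ (by positivity) (by positivity)]
  nlinarith [mul_nonneg hb hc, mul_nonneg ha hb, mul_nonneg ha hc, mul_nonneg ha (mul_nonneg hb hc)]

theorem term_nonneg (x y : ℤ → M) (n : ℤ) : 0 ≤ term x y n :=
  mul_nonneg (by positivity) (frac_bound _ dist_nonneg).1

theorem term_le (x y : ℤ → M) (n : ℤ) : term x y n ≤ (1 / 2 : ℝ) ^ n.natAbs :=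
  mul_le_of_le_one_right (by positivity) (frac_bound _ dist_nonneg).2

theorem summable_term (x y : ℤ → M) : Summable (term x y) :=
  Summable.of_nonneg_of_le (term_nonneg x y) (term_le x y) summable_half

theorem shiftDist_self (x : ℤ → M) : shiftDist x x = 0 := by simp [shiftDist]

theorem shiftDist_comm (x y : ℤ → M) : shiftDist x y = shiftDist y x := by
  simp only [shiftDist, dist_comm]

theorem shiftDist_tri (x y z : ℤ → M) : shiftDist x z ≤ shiftDist x y + shiftDist y z := by
  change ∑' n, term x z n ≤ ∑' n, term x y n + ∑' n, term y z n
  rw [← (summable_term x y).tsum_add (summable_term y z)]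
  refine (summable_term x z).tsum_le_tsum (fun n => ?_)
    ((summable_term x y).add (summable_term y z))
  simp only [term]
  rw [← mul_add]
  exact mul_le_mul_of_nonneg_left
    (frac_tri dist_nonneg dist_nonneg dist_nonneg (dist_triangle _ _ _)) (by positivity)

theorem continuous_shiftDist : Continuous (fun p : (ℤ → M) × (ℤ → M) => shiftDist p.1 p.2) := by
  refine continuous_tsum (u := fun n : ℤ => (1 / 2 : ℝ) ^ n.natAbs) (fun n => ?_)
    summable_half (fun n p => ?_)
  · have h : Continuous (fun p : (ℤ → M) × (ℤ → M) => dist (p.1 n) (p.2 n)) := by fun_prop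
    refine continuous_const.mul (h.div (continuous_const.add h) (fun p => ?_))
    have := dist_nonneg (x := p.1 n) (y := p.2 n)
    positivity
  · change ‖term p.1 p.2 n‖ ≤ _
    rw [Real.norm_of_nonneg (term_nonneg p.1 p.2 n)]
    exact term_le p.1 p.2 n

theorem isOpen_shiftBall (x : ℤ → M) (ε : ℝ) : IsOpen {y | shiftDist x y < ε} :=
  isOpen_lt (continuous_shiftDist.comp (by fun_prop : Continuous fun y => (x, y)))
    continuous_const

end dist

/-- Characterization of vanishing lower local dimension. -/
theorem lowerLocalDim_eq_zero_iff {X : Type*} [MeasurableSpace X] (d : X → X → ℝ)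
    (μ : Measure X) [IsProbabilityMeasure μ] (x : X) :
    lowerLocalDim d μ x = 0 ↔ ∀ k : ℕ, ∃ ε : ℝ, 0 < ε ∧ ε < 1 / (k + 1 : ℝ) ∧
      ENNReal.ofReal (ε ^ (1 / (k + 1 : ℝ))) < μ {y | d x y < ε} := by
  have key : ∀ ε s : ℝ, 0 < ε → ε < 1 → μ {y | d x y < ε} ≠ 0 →
      (Real.log (μ {y | d x y < ε}).toReal / Real.log ε < s ↔
        ENNReal.ofReal (ε ^ s) < μ {y | d x y < ε}) := by
    intro ε s h0 h1 hm
    have hpos : 0 < (μ {y | d x y < ε}).toReal :=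
      ENNReal.toReal_pos hm (measure_ne_top _ _)
    rw [ENNReal.ofReal_lt_iff_lt_toReal (by positivity) (measure_ne_top _ _),
      div_lt_iff_of_neg (Real.log_neg h0 h1), ← Real.log_rpow h0,
      Real.log_lt_log_iff (by positivity) hpos]
  constructor
  · intro h k
    unfold lowerLocalDim at h
    by_cases hc' : ∃ ε > 0, μ {y | d x y < ε} = 0
    · rw [if_pos hc'] at h
      exact absurd h ENNReal.top_ne_zero
    rw [if_neg hc'] at h
    have hc : ∀ ε > 0, μ {y | d x y < ε} ≠ 0 := fun ε hε hm => hc' ⟨ε, hε, hm⟩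
    have hk : (0 : ℝ) < 1 / (k + 1 : ℝ) := by positivity
    have hk1 : 1 / (k + 1 : ℝ) ≤ 1 := by
      rw [div_le_one (by positivity)]
      have : (0 : ℝ) ≤ k := by positivity
      linarith
    have h2 : liminf (fun ε : ℝ =>
        ENNReal.ofReal (Real.log (μ {y | d x y < ε}).toReal / Real.log ε)) (𝓝[>] (0 : ℝ))
        < ENNReal.ofReal (1 / (k + 1 : ℝ)) := by
      rw [h]; exact ENNReal.ofReal_pos.2 hk
    have h3 := frequently_lt_of_liminf_lt (by isBoundedDefault) h2
    obtain ⟨ε, hε, hε2⟩ := (h3.and_eventually (Ioo_mem_nhdsGT hk)).exists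
    refine ⟨ε, hε2.1, hε2.2, ?_⟩
    rw [← key ε _ hε2.1 (hε2.2.trans_le hk1) (hc ε hε2.1)]
    exact (ENNReal.ofReal_lt_ofReal_iff hk).1 hε
  · intro h
    have small : ∀ δ : ℝ, 0 < δ → ∃ ε, 0 < ε ∧ ε < δ ∧ ε < 1 ∧ μ {y | d x y < ε} ≠ 0 ∧
        Real.log (μ {y | d x y < ε}).toReal / Real.log ε < δ := by
      intro δ hδ
      obtain ⟨k, hk⟩ := exists_nat_one_div_lt hδ
      obtain ⟨ε, h0, h1, h2⟩ := h k
      have hk1 : 1 / (k + 1 : ℝ) ≤ 1 := by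
        rw [div_le_one (by positivity)]
        have : (0 : ℝ) ≤ k := by positivity
        linarith
      have hm : μ {y | d x y < ε} ≠ 0 := (lt_of_le_of_lt zero_le h2).ne'
      exact ⟨ε, h0, h1.trans hk, h1.trans_le hk1, hm,
        ((key ε _ h0 (h1.trans_le hk1) hm).2 h2).trans hk⟩
    have hc : ¬ ∃ ε > 0, μ {y | d x y < ε} = 0 := by
      rintro ⟨ε, hε, hm⟩
      obtain ⟨ε', h0, h1, -, h2, -⟩ := small ε hε
      exact h2 (measure_mono_null (fun y hy => lt_trans hy h1) hm)
    unfold lowerLocalDim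
    rw [if_neg hc]
    refine le_antisymm (ENNReal.le_of_forall_pos_le_add fun s hs _ => ?_) zero_le
    rw [zero_add]
    refine liminf_le_of_frequently_le' ?_
    rw [Filter.frequently_iff]
    intro U hU
    obtain ⟨u, hu0, hu⟩ := mem_nhdsGT_iff_exists_Ioo_subset.1 hU
    obtain ⟨ε, h0, h1, -, -, h3⟩ := small (min u s) (lt_min hu0 (by exact_mod_cast hs))
    refine ⟨ε, hu ⟨h0, h1.trans_le (min_le_left _ _)⟩, ?_⟩
    rw [← ENNReal.ofReal_coe_nnreal]
    exact ENNReal.ofReal_le_ofReal (h3.le.trans (min_le_right _ _))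

theorem isOpen_measure_gt {X : Type*} [TopologicalSpace X] [MeasurableSpace X]
    [OpensMeasurableSpace X] [HasOuterApproxClosed X] {G : Set X} (hG : IsOpen G) (c : ℝ≥0∞) :
    IsOpen {μ : ProbabilityMeasure X | c < μ.toMeasure G} := by
  rw [isOpen_iff_mem_nhds]
  intro μ hμ
  have h := ProbabilityMeasure.le_liminf_measure_open_of_tendsto
    (L := 𝓝 μ) (μs := id) (μ := μ) tendsto_id hG
  exact eventually_lt_of_lt_liminf (lt_of_lt_of_le hμ h)

/-- The set of points with a small good ball. -/
def good {M : Type*} [MetricSpace M] [MeasurableSpace M] (k : ℕ) (μ : Measure (ℤ → M)) :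
    Set (ℤ → M) :=
  {x | ∃ ε : ℝ, 0 < ε ∧ ε < 1 / (k + 1 : ℝ) ∧
      ENNReal.ofReal (ε ^ (1 / (k + 1 : ℝ))) < μ {y | shiftDist x y < ε}}

section gdelta
variable {M : Type*} [MetricSpace M] [CompleteSpace M]
    [TopologicalSpace.SeparableSpace M] [MeasurableSpace M] [BorelSpace M]

theorem isOpen_ball_gt (ε : ℝ) (c : ℝ≥0∞) :
    IsOpen {p : ProbabilityMeasure (ℤ → M) × (ℤ → M) |
      c < p.1.toMeasure {y | shiftDist p.2 y < ε}} := by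
  rw [isOpen_iff_mem_nhds]
  rintro ⟨μ, x⟩ h
  simp only [mem_ofPred_eq] at h
  have hU : {y | shiftDist x y < ε} = ⋃ n : ℕ, {y | shiftDist x y < ε - 1 / (n + 1 : ℝ)} := by
    ext y
    simp only [mem_ofPred_eq, mem_iUnion]
    constructor
    · intro hy
      obtain ⟨n, hn⟩ := exists_nat_one_div_lt (sub_pos.2 hy)
      exact ⟨n, by linarith⟩
    · rintro ⟨n, hn⟩
      have : (0 : ℝ) < 1 / (n + 1 : ℝ) := by positivity
      linarith
  have hmono : Monotone (fun n : ℕ => {y | shiftDist x y < ε - 1 / (n + 1 : ℝ)}) := by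
    intro m n hmn y hy
    have : 1 / (n + 1 : ℝ) ≤ 1 / (m + 1 : ℝ) := Nat.one_div_le_one_div hmn
    simp only [mem_ofPred_eq] at hy ⊢
    linarith
  rw [hU, hmono.measure_iUnion, lt_iSup_iff] at h
  obtain ⟨n, hn⟩ := h
  have hpos : (0 : ℝ) < 1 / (n + 1 : ℝ) := by positivity
  have h1 : ∀ᶠ p : ProbabilityMeasure (ℤ → M) × (ℤ → M) in 𝓝 (μ, x),
      c < p.1.toMeasure {y | shiftDist x y < ε - 1 / (n + 1 : ℝ)} :=
    ((isOpen_measure_gt (isOpen_shiftBall x (ε - 1 / (n + 1 : ℝ))) c).preimage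
      continuous_fst).mem_nhds hn
  have h2 : ∀ᶠ p : ProbabilityMeasure (ℤ → M) × (ℤ → M) in 𝓝 (μ, x),
      shiftDist x p.2 < 1 / (n + 1 : ℝ) :=
    continuous_snd.continuousAt.eventually
      ((isOpen_shiftBall x _).mem_nhds (by simpa only [mem_ofPred_eq, shiftDist_self] using hpos))
  filter_upwards [h1, h2] with p hp1 hp2
  refine hp1.trans_le (measure_mono fun y hy => ?_)
  simp only [mem_ofPred_eq] at hy ⊢
  have := shiftDist_tri p.2 x y
  rw [shiftDist_comm p.2 x] at this
  linarith

theorem isOpen_good_prod (k : ℕ) :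
    IsOpen {p : ProbabilityMeasure (ℤ → M) × (ℤ → M) | p.2 ∈ good k p.1.toMeasure} := by
  have : {p : ProbabilityMeasure (ℤ → M) × (ℤ → M) | p.2 ∈ good k p.1.toMeasure} =
      ⋃ ε : ℝ, ⋃ _ : 0 < ε ∧ ε < 1 / (k + 1 : ℝ),
        {p : ProbabilityMeasure (ℤ → M) × (ℤ → M) |
        ENNReal.ofReal (ε ^ (1 / (k + 1 : ℝ))) < p.1.toMeasure {y | shiftDist p.2 y < ε}} := by
    ext p
    simp [good, and_assoc]
  rw [this]
  exact isOpen_iUnion fun ε => isOpen_iUnion fun _ => isOpen_ball_gt ε _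

theorem isOpen_good (k : ℕ) (μ : ProbabilityMeasure (ℤ → M)) : IsOpen (good k μ.toMeasure) :=
  (isOpen_good_prod k).preimage (by fun_prop : Continuous fun x : ℤ → M => (μ, x))

theorem isOpen_good_gt (k : ℕ) (c : ℝ≥0∞) :
    IsOpen {μ : ProbabilityMeasure (ℤ → M) | c < μ.toMeasure (good k μ.toMeasure)} := by
  rw [isOpen_iff_mem_nhds]
  intro μ hμ
  obtain ⟨K, hK, hKc, hcK⟩ := (isOpen_good k μ).exists_lt_isCompact hμ
  obtain ⟨u, v, hu, hv, hμu, hKv, huv⟩ := generalized_tube_lemma (isCompact_singleton (x := μ))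
    hKc (isOpen_good_prod k) (by
      rintro ⟨ν, x⟩ ⟨h1, h2⟩
      obtain rfl : ν = μ := h1
      exact hK h2)
  filter_upwards [hu.mem_nhds (hμu rfl),
    (isOpen_measure_gt hv c).mem_nhds (hcK.trans_le (measure_mono hKv))] with ν h1 h2
  exact lt_of_lt_of_le h2 (measure_mono fun x hx => huv (mk_mem_prod h1 hx))

theorem ae_iff_good (μ : ProbabilityMeasure (ℤ → M)) :
    (∀ᵐ x ∂μ.toMeasure, lowerLocalDim shiftDist μ.toMeasure x = 0) ↔
      ∀ k m : ℕ, 1 - (m + 1 : ℝ≥0∞)⁻¹ < μ.toMeasure (good k μ.toMeasure) := by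
  simp only [lowerLocalDim_eq_zero_iff]
  rw [ae_all_iff]
  refine forall_congr' fun k => ?_
  have h1 : (∀ᵐ x ∂μ.toMeasure, ∃ ε : ℝ, 0 < ε ∧ ε < 1 / (k + 1 : ℝ) ∧
      ENNReal.ofReal (ε ^ (1 / (k + 1 : ℝ))) < μ.toMeasure {y | shiftDist x y < ε}) ↔
      μ.toMeasure (good k μ.toMeasure) = 1 :=
    (prob_compl_eq_zero_iff (isOpen_good k μ).measurableSet)
  rw [h1]
  constructor
  · intro h m
    rw [h]
    exact ENNReal.sub_lt_self ENNReal.one_ne_top one_ne_zero (by simp)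
  · intro h
    refine le_antisymm prob_le_one ?_
    have ht : Tendsto (fun m : ℕ => 1 - ((m + 1 : ℕ) : ℝ≥0∞)⁻¹) atTop (𝓝 (1 - 0)) :=
      ENNReal.Tendsto.sub tendsto_const_nhds
        (ENNReal.tendsto_inv_nat_nhds_zero.comp (tendsto_add_atTop_nat 1)) (by simp)
    rw [tsub_zero] at ht
    exact le_of_tendsto' ht fun m => by simpa using (h m).le

theorem isGδ_HD :
    IsGδ {μ : {ν : ProbabilityMeasure (ℤ → M) // ν.toMeasure.map fullShift = ν.toMeasure} |
        ∀ᵐ x ∂μ.1.toMeasure, lowerLocalDim shiftDist μ.1.toMeasure x = 0} := by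
  simp only [ae_iff_good, ofPred_forall]
  exact .iInter fun k => .iInter fun m =>
    ((isOpen_good_gt k _).preimage continuous_subtype_val).isGδ

end gdelta

section density

theorem cesaro {g : ℕ × ℕ → ℝ} {C L : ℝ} (hb : ∀ p, |g p| ≤ C)
    (hg : Tendsto g atTop (𝓝 L)) :
    Tendsto (fun n : ℕ => (1 / (n + 1 : ℝ)) * ∑ a ∈ Finset.range (n + 1), g (n + 1 - a, a))
      atTop (𝓝 L) := by
  rw [Metric.tendsto_atTop]
  intro η hη
  obtain ⟨⟨m1, m2⟩, hm⟩ := (Metric.tendsto_atTop.1 hg) (η / 2) (by linarith)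
  set m := max m1 m2
  have hC : 0 ≤ C := (abs_nonneg _).trans (hb (0, 0))
  set K := C + |L| with hKdef
  have hK : 0 ≤ K := by positivity
  have hgK : ∀ p, |g p - L| ≤ K := fun p =>
    (abs_sub (g p) L).trans (by have := hb p; linarith)
  obtain ⟨N, hN⟩ := exists_nat_gt (2 * (K * m + K * m) / η)
  refine ⟨N, fun n hn => ?_⟩
  have hterm : ∀ a ∈ Finset.range (n + 1), |g (n + 1 - a, a) - L| ≤
      η / 2 + ((if a < m then K else 0) + (if n - a < m then K else 0)) := by
    intro a ha
    have ha' : a < n + 1 := Finset.mem_range.1 ha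
    have h0 := hgK (n + 1 - a, a)
    by_cases h1 : a < m
    · rw [if_pos h1]
      split_ifs <;> linarith
    · by_cases h2 : n - a < m
      · rw [if_pos h2]
        split_ifs <;> linarith
      · rw [if_neg h1, if_neg h2]
        have := hm (n + 1 - a, a) ⟨by
          have := le_max_left m1 m2
          change m1 ≤ n + 1 - a
          omega, by
          have := le_max_right m1 m2
          change m2 ≤ a
          omega⟩
        rw [Real.dist_eq] at this
        linarith
  have hs1 : ∑ a ∈ Finset.range (n + 1), (if a < m then K else 0) ≤ K * m := by
    rw [← Finset.sum_filter, Finset.sum_const, nsmul_eq_mul, mul_comm]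
    refine mul_le_mul_of_nonneg_left ?_ hK
    have : ((Finset.range (n + 1)).filter (fun a => a < m)).card ≤ (Finset.range m).card :=
      Finset.card_le_card fun a ha => by
        simp only [Finset.mem_filter, Finset.mem_range] at ha ⊢
        exact ha.2
    rw [Finset.card_range] at this
    exact_mod_cast this
  have hs2 : ∑ a ∈ Finset.range (n + 1), (if n - a < m then K else 0) ≤ K * m := by
    have := Finset.sum_range_reflect (fun a => if a < m then K else 0) (n + 1)
    simp only [Nat.add_sub_cancel] at this
    rw [this]
    exact hs1
  have hn0 : (0 : ℝ) < n + 1 := by positivity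
  have hsum : |∑ a ∈ Finset.range (n + 1), (g (n + 1 - a, a) - L)| ≤
      (n + 1) * (η / 2) + (K * m + K * m) := by
    refine (Finset.abs_sum_le_sum_abs _ _).trans ((Finset.sum_le_sum hterm).trans ?_)
    rw [Finset.sum_add_distrib, Finset.sum_add_distrib, Finset.sum_const, Finset.card_range,
      nsmul_eq_mul]
    push_cast
    linarith
  have heq : (1 / (n + 1 : ℝ)) * ∑ a ∈ Finset.range (n + 1), g (n + 1 - a, a) - L =
      (∑ a ∈ Finset.range (n + 1), (g (n + 1 - a, a) - L)) / (n + 1) := by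
    rw [Finset.sum_sub_distrib, Finset.sum_const, Finset.card_range, nsmul_eq_mul]
    push_cast
    field_simp
  rw [Real.dist_eq, heq, abs_div, abs_of_pos hn0, div_lt_iff₀ hn0]
  rw [div_lt_iff₀ hη] at hN
  have hNn : (N : ℝ) ≤ n := by exact_mod_cast hn
  nlinarith

variable {M : Type*}

theorem iterate_fullShift (a : ℕ) (x : ℤ → M) (i : ℤ) : fullShift^[a] x i = x (i - a) := by
  induction a generalizing x with
  | zero => simp
  | succ a ih =>
    rw [Function.iterate_succ_apply, ih]
    simp only [fullShift]
    congr 1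
    push_cast
    ring

/-- Quantize and periodize. -/
def G (q : ℕ → M → M) (n a : ℕ) (x : ℤ → M) : ℤ → M := fun i => q n (x ((i - a) % n))

theorem fullShift_G (q : ℕ → M → M) (n a : ℕ) (x : ℤ → M) :
    fullShift (G q n a x) = G q n (a + 1) x := by
  funext i
  simp only [fullShift, G]
  congr 3
  push_cast
  ring

theorem G_period (q : ℕ → M → M) (n : ℕ) : G q n n = G q n 0 := by
  funext x i
  simp [G]

theorem G_range_finite (q : ℕ → M → M) (hq : ∀ n, (range (q n)).Finite) (n a : ℕ) (hn : 0 < n) :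
    (range (G q n a)).Finite := by
  have h1 : {w : Fin n → M | ∀ j, w j ∈ range (q n)}.Finite := Set.Finite.pi' fun _ => hq n
  have hlt : ∀ i : ℤ, ((i - a) % n).toNat < n := fun i => by
    have h1 := Int.emod_nonneg (i - a) (b := n) (by omega)
    have h2 := Int.emod_lt_of_pos (i - a) (b := n) (by omega)
    omega
  refine (h1.image (fun w (i : ℤ) => w ⟨((i - a) % n).toNat, hlt i⟩)).subset ?_
  rintro _ ⟨x, rfl⟩
  refine ⟨fun j => q n (x (j : ℕ)), fun j => ⟨_, rfl⟩, ?_⟩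
  funext i
  simp only [G]
  rw [Int.toNat_of_nonneg (Int.emod_nonneg (i - a) (b := n) (by omega))]

variable [MetricSpace M] [CompleteSpace M]
    [TopologicalSpace.SeparableSpace M] [MeasurableSpace M] [BorelSpace M]

theorem measurable_fullShift : Measurable (fullShift (M := M)) :=
  measurable_pi_lambda _ fun i => measurable_pi_apply (i - 1)

theorem measurable_G {q : ℕ → M → M} (hq : ∀ n, Measurable (q n)) (n a : ℕ) :
    Measurable (G q n a) :=
  measurable_pi_lambda _ fun _ => (hq n).comp (measurable_pi_apply _)

theorem tendsto_G {q : ℕ → M → M} (hlim : ∀ x, Tendsto (fun n => q n x) atTop (𝓝 x))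
    (x : ℤ → M) :
    Tendsto (fun p : ℕ × ℕ => G q (p.1 + p.2) p.2 (fullShift^[p.1] x)) atTop (𝓝 x) := by
  rw [tendsto_pi_nhds]
  intro i
  have h1 : Tendsto (fun p : ℕ × ℕ => q (p.1 + p.2) (x i)) atTop (𝓝 (x i)) := by
    refine (hlim (x i)).comp ?_
    refine tendsto_atTop_mono (fun p : ℕ × ℕ => Nat.le_add_right p.1 p.2) ?_
    rw [← prod_atTop_atTop_eq]
    exact tendsto_fst
  refine h1.congr' ?_
  filter_upwards [eventually_ge_atTop ((i.natAbs + 1, i.natAbs + 1) : ℕ × ℕ)] with p hp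
  have hp1 : i.natAbs + 1 ≤ p.1 := hp.1
  have hp2 : i.natAbs + 1 ≤ p.2 := hp.2
  simp only [G, iterate_fullShift]
  congr 2
  push_cast
  have : (i - p.2) % ((p.1 : ℤ) + p.2) = i + p.1 := by
    rw [← Int.add_emod_right, show i - (p.2 : ℤ) + (p.1 + p.2) = i + p.1 by ring]
    exact Int.emod_eq_of_lt (by omega) (by omega)
  rw [this]
  ring

/-- The approximating measure. -/
noncomputable def nu (q : ℕ → M → M) (μ : Measure (ℤ → M)) (n : ℕ) : Measure (ℤ → M) :=
  ENNReal.ofReal (1 / (n + 1 : ℝ)) • ∑ a ∈ Finset.range (n + 1), μ.map (G q (n + 1) a)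

theorem nu_prob {q : ℕ → M → M} (hq : ∀ n, Measurable (q n)) (μ : Measure (ℤ → M))
    [IsProbabilityMeasure μ] (n : ℕ) : IsProbabilityMeasure (nu q μ n) := by
  constructor
  have h : ∀ a, μ.map (G q (n + 1) a) univ = 1 := fun a => by
    rw [Measure.map_apply (measurable_G hq _ _) MeasurableSet.univ]
    simp
  rw [nu, Measure.smul_apply, Measure.finsetSum_apply, Finset.sum_congr rfl (fun a _ => h a)]
  rw [Finset.sum_const, Finset.card_range, nsmul_eq_mul, mul_one, smul_eq_mul,
    ← ENNReal.ofReal_natCast, ← ENNReal.ofReal_mul (by positivity)]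
  push_cast
  rw [one_div, inv_mul_cancel₀ (by positivity), ENNReal.ofReal_one]

theorem nu_inv {q : ℕ → M → M} (hq : ∀ n, Measurable (q n)) (μ : Measure (ℤ → M)) (n : ℕ) :
    (nu q μ n).map fullShift = nu q μ n := by
  have h : ∀ a, (μ.map (G q (n + 1) a)).map fullShift = μ.map (G q (n + 1) (a + 1)) := fun a => by
    rw [Measure.map_map measurable_fullShift (measurable_G hq _ _)]
    congr 1
    funext x
    exact fullShift_G q _ _ x
  rw [nu, Measure.map_smul, ← Measure.mapₗ_apply_of_measurable measurable_fullShift, map_sum]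
  simp only [Measure.mapₗ_apply_of_measurable measurable_fullShift, h]
  congr 1
  rw [Finset.sum_range_succ, Finset.sum_range_succ', G_period]

theorem nu_atomic {q : ℕ → M → M} (hq : ∀ n, Measurable (q n)) (hfin : ∀ n, (range (q n)).Finite)
    (μ : Measure (ℤ → M)) (n : ℕ) :
    ∃ S : Set (ℤ → M), S.Finite ∧ nu q μ n Sᶜ = 0 := by
  have hS : (⋃ a ∈ Finset.range (n + 1), range (G q (n + 1) a)).Finite :=
    (Finset.range (n + 1)).finite_toSet.biUnion fun a _ =>
      G_range_finite q hfin (n + 1) a (Nat.succ_pos n)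
  refine ⟨_, hS, ?_⟩
  rw [nu, Measure.smul_apply, Measure.finsetSum_apply, Finset.sum_eq_zero, smul_zero]
  intro a ha
  rw [Measure.map_apply (measurable_G hq _ _) hS.measurableSet.compl]
  convert measure_empty (μ := μ)
  rw [eq_empty_iff_forall_notMem]
  intro x hx
  exact hx (mem_biUnion (x := a) ha ⟨x, rfl⟩)

theorem ae_of_finite (μ : Measure (ℤ → M)) [IsProbabilityMeasure μ] {S : Set (ℤ → M)}
    (hS : S.Finite) (h0 : μ Sᶜ = 0) : ∀ᵐ x ∂μ, lowerLocalDim shiftDist μ x = 0 := by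
  have h1 : μ {x ∈ S | μ {x} = 0} = 0 := by
    have hf : {x ∈ S | μ {x} = 0}.Finite := hS.subset fun x hx => hx.1
    rw [← biUnion_of_singleton {x ∈ S | μ {x} = 0}, measure_biUnion_null_iff hf.countable]
    exact fun x hx => hx.2
  have h2 : ∀ᵐ x ∂μ, x ∉ Sᶜ := measure_eq_zero_iff_ae_notMem.1 h0
  have h3 : ∀ᵐ x ∂μ, x ∉ {x ∈ S | μ {x} = 0} := measure_eq_zero_iff_ae_notMem.1 h1
  filter_upwards [h2, h3] with x hx2 hx3
  have hxS : x ∈ S := not_not.1 hx2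
  have hx : μ {x} ≠ 0 := fun h => hx3 ⟨hxS, h⟩
  rw [lowerLocalDim_eq_zero_iff]
  intro k
  have hk : (0 : ℝ) < 1 / (k + 1 : ℝ) := by positivity
  have ht : Tendsto (fun ε : ℝ => ENNReal.ofReal (ε ^ (1 / (k + 1 : ℝ)))) (𝓝[>] 0) (𝓝 0) := by
    have h : ContinuousAt (fun ε : ℝ => ENNReal.ofReal (ε ^ (1 / (k + 1 : ℝ)))) 0 :=
      ENNReal.continuous_ofReal.continuousAt.comp (Real.continuousAt_rpow_const _ _ (Or.inr hk.le))
    have h' := h.tendsto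
    rw [Real.zero_rpow hk.ne', ENNReal.ofReal_zero] at h'
    exact h'.mono_left nhdsWithin_le_nhds
  obtain ⟨ε, h4, h5⟩ := ((ht.eventually_lt_const (pos_iff_ne_zero.2 hx)).and
    (Ioo_mem_nhdsGT hk)).exists
  refine ⟨ε, h5.1, h5.2, h4.trans_le (measure_mono ?_)⟩
  rintro _ rfl
  simpa only [mem_ofPred_eq, shiftDist_self] using h5.1

theorem integral_nu {q : ℕ → M → M} (hq : ∀ n, Measurable (q n)) (μ : Measure (ℤ → M))
    [IsProbabilityMeasure μ] (hμ : μ.map fullShift = μ) (n : ℕ)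
    (f : BoundedContinuousFunction (ℤ → M) ℝ) :
    ∫ x, f x ∂(nu q μ n) = (1 / (n + 1 : ℝ)) * ∑ a ∈ Finset.range (n + 1),
      ∫ x, f (G q ((n + 1 - a) + a) a (fullShift^[n + 1 - a] x)) ∂μ := by
  have hpres : MeasurePreserving fullShift μ μ := ⟨measurable_fullShift, hμ⟩
  rw [nu, integral_smul_measure, ENNReal.toReal_ofReal (by positivity), smul_eq_mul]
  congr 1
  rw [integral_finsetSum_measure]
  · refine Finset.sum_congr rfl fun a ha => ?_
    have ha' : a < n + 1 := Finset.mem_range.1 ha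
    rw [show n + 1 - a + a = n + 1 by omega,
      integral_map (measurable_G hq _ _).aemeasurable
        f.continuous.measurable.aestronglyMeasurable]
    conv_lhs => rw [← (hpres.iterate (n + 1 - a)).map_eq]
    exact integral_map (hpres.iterate (n + 1 - a)).measurable.aemeasurable
      (f.continuous.measurable.comp (measurable_G hq _ _)).aestronglyMeasurable
  · intro a _
    have : IsProbabilityMeasure (μ.map (G q (n + 1) a)) :=
      Measure.isProbabilityMeasure_map (measurable_G hq _ _).aemeasurable
    exact f.integrable _

theorem tendsto_integral_nu {q : ℕ → M → M} (hq : ∀ n, Measurable (q n))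
    (hlim : ∀ x, Tendsto (fun n => q n x) atTop (𝓝 x)) (μ : Measure (ℤ → M))
    [IsProbabilityMeasure μ] (hμ : μ.map fullShift = μ)
    (f : BoundedContinuousFunction (ℤ → M) ℝ) :
    Tendsto (fun n => ∫ x, f x ∂(nu q μ n)) atTop (𝓝 (∫ x, f x ∂μ)) := by
  simp only [integral_nu hq μ hμ]
  refine cesaro (g := fun p : ℕ × ℕ => ∫ x, f (G q (p.1 + p.2) p.2 (fullShift^[p.1] x)) ∂μ)
    (C := ‖f‖) (fun p => ?_) ?_
  · rw [← Real.norm_eq_abs]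
    refine (norm_integral_le_of_norm_le_const (C := ‖f‖)
      (Eventually.of_forall fun x => f.norm_coe_le_norm _)).trans ?_
    simp
  · refine tendsto_integral_filter_of_dominated_convergence (fun _ => ‖f‖)
      (Eventually.of_forall fun p => ?_)
      (Eventually.of_forall fun p => Eventually.of_forall fun x => f.norm_coe_le_norm _)
      (integrable_const _) (Eventually.of_forall fun x => ?_)
    · exact (f.continuous.measurable.comp ((measurable_G hq _ _).comp
        (measurable_fullShift.iterate p.1))).aestronglyMeasurable
    · exact (f.continuous.tendsto x).comp (tendsto_G hlim x)

theorem dense_HD :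
    Dense {μ : {ν : ProbabilityMeasure (ℤ → M) // ν.toMeasure.map fullShift = ν.toMeasure} |
        ∀ᵐ x ∂μ.1.toMeasure, lowerLocalDim shiftDist μ.1.toMeasure x = 0} := by
  rintro ⟨μ, hμ⟩
  obtain ⟨x0⟩ : Nonempty (ℤ → M) := μ.nonempty
  set q : ℕ → M → M := fun n =>
    SimpleFunc.approxOn (id : M → M) measurable_id univ (x0 0) (mem_univ _) n
  have hq : ∀ n, Measurable (q n) := fun n => SimpleFunc.measurable _
  have hfin : ∀ n, (range (q n)).Finite := fun n => SimpleFunc.finite_range _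
  have hlim : ∀ x, Tendsto (fun n => q n x) atTop (𝓝 x) := fun x =>
    SimpleFunc.tendsto_approxOn measurable_id (mem_univ _) (by simp)
  let ν : ℕ → {ν : ProbabilityMeasure (ℤ → M) // ν.toMeasure.map fullShift = ν.toMeasure} :=
    fun n => ⟨⟨nu q μ.toMeasure n, nu_prob hq _ n⟩, nu_inv hq _ n⟩
  refine mem_closure_of_tendsto (f := ν) (b := atTop) ?_ (Eventually.of_forall fun n => ?_)
  · rw [tendsto_subtype_rng, ProbabilityMeasure.tendsto_iff_forall_integral_tendsto]
    exact fun f => tendsto_integral_nu hq hlim μ.toMeasure hμ f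
  · obtain ⟨S, hS, hS0⟩ := nu_atomic hq hfin μ.toMeasure n
    exact ae_of_finite (ν n).1.toMeasure hS hS0

end density

end ShiftHD

/-- For the full shift on `ℤ → M` over a perfect Polish metric space `M`,
the set `HD` of invariant measures whose lower local dimension vanishes almost everywhere
(equivalently, with Hausdorff dimension zero) is a dense `Gδ` subset of `M(T)`. -/
theorem fullShift_hausdorffDimZero_denseGδ {M : Type*} [MetricSpace M] [CompleteSpace M]
    [TopologicalSpace.SeparableSpace M] [PerfectSpace M]
    [MeasurableSpace M] [BorelSpace M] :
    IsGδ {μ : {ν : ProbabilityMeasure (ℤ → M) // ν.toMeasure.map fullShift = ν.toMeasure} |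
        ∀ᵐ x ∂μ.1.toMeasure, lowerLocalDim shiftDist μ.1.toMeasure x = 0} ∧
    Dense {μ : {ν : ProbabilityMeasure (ℤ → M) // ν.toMeasure.map fullShift = ν.toMeasure} |
        ∀ᵐ x ∂μ.1.toMeasure, lowerLocalDim shiftDist μ.1.toMeasure x = 0} := by
  exact ⟨ShiftHD.isGδ_HD, ShiftHD.dense_HD⟩
end

section
/- For the full shift T on X = ∏_{n∈ℤ} M over a perfect Polish metric space M, the set PD = {μ ∈ M(T) : d̄_μ(x) = +∞ for μ-a.e. x ∈ X} (equivalently, the set of μ with packing dimension dim_P(μ) = +∞) is a dense Gδ subset of M(T). -/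
open Filter MeasureTheory Topology Metric Set
open scoped ENNReal NNReal

noncomputable section
attribute [local instance] Classical.propDecidable

end

namespace ShiftPD

lemma summable_half : Summable (fun n : ℤ => (1 / 2 : ℝ) ^ n.natAbs) := by
  apply Summable.of_nat_of_neg
  · simpa using summable_geometric_two
  · simpa using summable_geometric_two

section dist
variable {M : Type*} [MetricSpace M]

lemma term_nonneg (x y : ℤ → M) (n : ℤ) :
    0 ≤ (1 / 2 : ℝ) ^ n.natAbs * (dist (x n) (y n) / (1 + dist (x n) (y n))) := by
  positivity

lemma term_le (x y : ℤ → M) (n : ℤ) :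
    (1 / 2 : ℝ) ^ n.natAbs * (dist (x n) (y n) / (1 + dist (x n) (y n))) ≤
      (1 / 2 : ℝ) ^ n.natAbs := by
  have h0 : 0 ≤ dist (x n) (y n) := dist_nonneg
  have h : dist (x n) (y n) / (1 + dist (x n) (y n)) ≤ 1 := by
    rw [div_le_one (by positivity)]; linarith
  have h2 : (0 : ℝ) ≤ (1 / 2 : ℝ) ^ n.natAbs := by positivity
  nlinarith

lemma term_summable (x y : ℤ → M) : Summable (fun n : ℤ =>
    (1 / 2 : ℝ) ^ n.natAbs * (dist (x n) (y n) / (1 + dist (x n) (y n)))) :=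
  Summable.of_nonneg_of_le (term_nonneg x y) (term_le x y) summable_half

lemma shiftDist_self (x : ℤ → M) : shiftDist x x = 0 := by
  simp [shiftDist]

lemma term_le_shiftDist (x y : ℤ → M) (n : ℤ) :
    (1 / 2 : ℝ) ^ n.natAbs * (dist (x n) (y n) / (1 + dist (x n) (y n))) ≤ shiftDist x y :=
  (term_summable x y).le_tsum n (fun j _ => term_nonneg x y j)

lemma frac_triangle {a b c : ℝ} (ha : 0 ≤ a) (hb : 0 ≤ b) (hc : 0 ≤ c) (h : c ≤ a + b) :
    c / (1 + c) ≤ a / (1 + a) + b / (1 + b) := by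
  rw [div_add_div _ _ (by positivity) (by positivity), div_le_div_iff₀ (by positivity)
    (by positivity)]
  nlinarith [mul_nonneg ha hb, mul_nonneg (mul_nonneg ha hb) hc]

lemma shiftDist_triangle (x y z : ℤ → M) : shiftDist x z ≤ shiftDist x y + shiftDist y z := by
  unfold shiftDist
  rw [← (term_summable x y).tsum_add (term_summable y z)]
  refine (term_summable x z).tsum_le_tsum (fun n => ?_) ((term_summable x y).add
    (term_summable y z))
  rw [← mul_add]
  gcongr
  exact frac_triangle dist_nonneg dist_nonneg dist_nonneg (dist_triangle _ _ _)

lemma continuous_shiftDist : Continuous (fun p : (ℤ → M) × (ℤ → M) => shiftDist p.1 p.2) := by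
  unfold shiftDist
  refine continuous_tsum (u := fun n : ℤ => (1 / 2 : ℝ) ^ n.natAbs) (fun n => ?_) summable_half
    (fun n p => ?_)
  · have h1 : Continuous (fun p : (ℤ → M) × (ℤ → M) => dist (p.1 n) (p.2 n)) := by fun_prop
    refine continuous_const.mul (h1.div (continuous_const.add h1) (fun p => ?_))
    positivity
  · rw [Real.norm_of_nonneg (term_nonneg _ _ _)]
    exact term_le _ _ _

lemma shiftDist_le_imp (x y : ℤ → M) {r : ℝ} (hr : 0 < r) {N n : ℕ} (hn : n < N)
    (h : shiftDist x y ≤ (1 / 2 : ℝ) ^ N * (r / (1 + r))) : dist (y n) (x n) < r := by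
  have h1 := (term_le_shiftDist x y n).trans h
  rw [dist_comm]
  set ρ := dist (x n) (y n)
  have hρ : 0 ≤ ρ := dist_nonneg
  by_contra! hc
  have h2 : r / (1 + r) ≤ ρ / (1 + ρ) := by
    rw [div_le_div_iff₀ (by positivity) (by positivity)]; nlinarith
  have h3 : (1 / 2 : ℝ) ^ N < (1 / 2 : ℝ) ^ n :=
    pow_lt_pow_right_of_lt_one₀ (by norm_num) (by norm_num) hn
  have h4 : 0 < r / (1 + r) := by positivity
  simp only [Int.natAbs_natCast] at h1
  have h5 : (0:ℝ) < (1 / 2 : ℝ) ^ n := by positivity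
  nlinarith

end dist

/-- The key predicate. -/
def Small {X : Type*} [MeasurableSpace X] (d : X → X → ℝ) (k : ℕ) (μ : Measure X) (x : X) : Prop :=
  ∃ ε : ℝ, 0 < ε ∧ ε < 1 / (k + 2) ∧ μ {y | d x y ≤ ε} < ENNReal.ofReal (ε ^ k)

lemma log_div_lt_iff {m ε : ℝ} (hm : 0 < m) (hε : 0 < ε) (hε1 : ε < 1) (k : ℕ) :
    (k : ℝ) < Real.log m / Real.log ε ↔ m < ε ^ k := by
  have h1 : Real.log ε < 0 := Real.log_neg hε hε1
  rw [lt_div_iff_of_neg h1, ← Real.log_pow, Real.log_lt_log_iff hm (by positivity)]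

lemma upperLocalDim_eq_top_iff {X : Type*} [MeasurableSpace X] (d : X → X → ℝ)
    (μ : Measure X) [IsProbabilityMeasure μ] (x : X) :
    upperLocalDim d μ x = ⊤ ↔ ∀ k, Small d k μ x := by
  unfold upperLocalDim
  constructor
  · intro h k
    split_ifs at h with h0
    · obtain ⟨ε, hε, h0⟩ := h0
      refine ⟨min (ε / 2) (1 / (k + 3)), by positivity, ?_, ?_⟩
      · refine (min_le_right _ _).trans_lt ?_
        gcongr
        norm_num
      · have hle : {y | d x y ≤ min (ε / 2) (1 / ((k : ℝ) + 3))} ⊆ {y | d x y < ε} := by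
          intro y hy
          have : d x y ≤ ε / 2 := le_trans hy (min_le_left _ _)
          simp only [Set.mem_ofPred_eq]
          linarith
        rw [measure_mono_null hle h0]
        simp only [ENNReal.ofReal_pos]
        positivity
    · push Not at h0
      have hlt : (((2 * k + 1 : ℕ) : ℝ≥0∞)) < limsup (fun ε : ℝ =>
          ENNReal.ofReal (Real.log (μ {y | d x y < ε}).toReal / Real.log ε)) (𝓝[>] (0 : ℝ)) := by
        rw [h]; exact ENNReal.natCast_lt_top _
      have hf := frequently_lt_of_lt_limsup (by isBoundedDefault) hlt
      have hk : (0 : ℝ) < 1 / (k + 2) := by positivity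
      obtain ⟨ε, h1, h2⟩ := (hf.and_eventually (Ioo_mem_nhdsGT hk)).exists
      have hε1 : ε < 1 / 2 := h2.2.trans_le (by gcongr; linarith [(Nat.cast_nonneg k : (0:ℝ) ≤ k)])
      have hε0 : 0 < ε := h2.1
      have hm : 0 < (μ {y | d x y < ε}).toReal := ENNReal.toReal_pos (h0 ε hε0) (measure_ne_top _ _)
      rw [← ENNReal.ofReal_natCast, ENNReal.ofReal_lt_ofReal_iff_of_nonneg (by positivity),
        log_div_lt_iff hm hε0 (by linarith)] at h1
      refine ⟨ε / 2, by positivity, by linarith [h2.2], ?_⟩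
      have hsub : {y | d x y ≤ ε / 2} ⊆ {y | d x y < ε} := by
        intro y hy
        simp only [Set.mem_ofPred_eq] at hy ⊢
        linarith
      refine (measure_mono hsub).trans_lt ?_
      rw [← ENNReal.ofReal_toReal (measure_ne_top μ {y | d x y < ε})]
      rw [ENNReal.ofReal_lt_ofReal_iff (by positivity)]
      refine h1.trans_le ?_
      have h3 : ε ^ (2 * k + 1) ≤ ε ^ (2 * k) :=
        pow_le_pow_of_le_one hε0.le (by linarith) (by omega)
      refine h3.trans ?_
      rw [pow_mul]
      gcongr
      nlinarith
  · intro h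
    split_ifs with h0
    · rfl
    · push Not at h0
      rw [eq_top_iff]
      refine ENNReal.le_of_forall_nnreal_lt fun r _ => ?_
      obtain ⟨k0, hk0⟩ := exists_nat_gt r
      have : ∃ᶠ ε in 𝓝[>] (0 : ℝ), (r : ℝ≥0∞) ≤
          ENNReal.ofReal (Real.log (μ {y | d x y < ε}).toReal / Real.log ε) := by
        rw [((nhdsGT_basis (0 : ℝ))).frequently_iff]
        intro δ hδ
        obtain ⟨k1, hk1⟩ := exists_nat_one_div_lt hδ
        obtain ⟨ε, hε0, hε1, hε⟩ := h (max k0 k1)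
        set k := max k0 k1
        have hkk : (k1 : ℝ) ≤ k := by exact_mod_cast le_max_right _ _
        have hkk0 : (k0 : ℝ) ≤ k := by exact_mod_cast le_max_left _ _
        refine ⟨ε, ⟨hε0, hε1.trans_le (le_trans ?_ hk1.le)⟩, ?_⟩
        · exact one_div_le_one_div_of_le (by positivity) (by linarith)
        have hε2 : ε < 1 := hε1.trans_le (by
          rw [div_le_one (by positivity)]; linarith [(Nat.cast_nonneg k : (0:ℝ) ≤ k)])
        have hm : 0 < (μ {y | d x y < ε}).toReal :=
          ENNReal.toReal_pos (h0 ε hε0) (measure_ne_top _ _)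
        have h2 : (μ {y | d x y < ε}).toReal < ε ^ k := by
          have : μ {y | d x y < ε} < ENNReal.ofReal (ε ^ k) :=
            (measure_mono (fun y (hy : d x y < ε) => hy.le)).trans_lt hε
          rwa [← ENNReal.lt_ofReal_iff_toReal_lt (measure_ne_top _ _)]
        rw [← log_div_lt_iff hm hε0 hε2] at h2
        rw [← ENNReal.ofReal_coe_nnreal]
        apply ENNReal.ofReal_le_ofReal
        have : (r : ℝ) < k0 := by exact_mod_cast hk0
        linarith
      exact le_limsup_of_frequently_le this (by isBoundedDefault)

section gdelta
variable {M : Type*} [MetricSpace M] [CompleteSpace M]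
    [TopologicalSpace.SeparableSpace M] [MeasurableSpace M] [BorelSpace M]

lemma isClosed_cball (x : ℤ → M) (ε : ℝ) : IsClosed {y | shiftDist x y ≤ ε} :=
  isClosed_le (continuous_shiftDist.comp (Continuous.prodMk_right x)) continuous_const

lemma eventually_closed_lt (μ : ProbabilityMeasure (ℤ → M)) {F : Set (ℤ → M)} (hF : IsClosed F)
    {c : ℝ≥0∞} (h : μ.toMeasure F < c) : ∀ᶠ ν in 𝓝 μ, ν.toMeasure F < c := by
  have h1 := ProbabilityMeasure.limsup_measure_closed_le_of_tendsto (L := 𝓝 μ) (μs := id)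
    (μ := μ) tendsto_id hF
  exact eventually_lt_of_limsup_lt (h1.trans_lt h) (by isBoundedDefault)

lemma eventually_lt_open (μ : ProbabilityMeasure (ℤ → M)) {G : Set (ℤ → M)} (hG : IsOpen G)
    {c : ℝ≥0∞} (h : c < μ.toMeasure G) : ∀ᶠ ν in 𝓝 μ, c < ν.toMeasure G := by
  have h1 := ProbabilityMeasure.le_liminf_measure_open_of_tendsto (L := 𝓝 μ) (μs := id)
    (μ := μ) tendsto_id hG
  exact eventually_lt_of_lt_liminf (h.trans_le h1) (by isBoundedDefault)

lemma isOpen_small (k : ℕ) : IsOpen {p : ProbabilityMeasure (ℤ → M) × (ℤ → M) |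
    Small shiftDist k p.1.toMeasure p.2} := by
  rw [isOpen_iff_mem_nhds]
  rintro ⟨μ, x⟩ ⟨ε, hε0, hε1, hε⟩
  have hlim : Tendsto (fun n : ℕ => μ.toMeasure {y | shiftDist x y ≤ ε + 1 / ((n : ℝ) + 1)}) atTop
      (𝓝 (μ.toMeasure (⋂ n : ℕ, {y | shiftDist x y ≤ ε + 1 / ((n : ℝ) + 1)}))) := by
    apply tendsto_measure_iInter_atTop
    · exact fun n => (isClosed_cball x _).measurableSet.nullMeasurableSet
    · intro m n hmn y hy
      simp only [Set.mem_ofPred_eq] at hy ⊢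
      refine le_trans hy ?_
      gcongr
    · exact ⟨0, measure_ne_top _ _⟩
  have heq : (⋂ n : ℕ, {y | shiftDist x y ≤ ε + 1 / ((n : ℝ) + 1)}) = {y | shiftDist x y ≤ ε} := by
    ext y
    simp only [mem_iInter, Set.mem_ofPred_eq]
    constructor
    · intro h
      refine ge_of_tendsto' (x := atTop) ?_ h
      simpa using tendsto_const_nhds.add (tendsto_one_div_add_atTop_nhds_zero_nat (𝕜 := ℝ))
    · intro h n
      have : (0 : ℝ) < 1 / ((n : ℝ) + 1) := by positivity
      linarith
  rw [heq] at hlim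
  obtain ⟨n, hn⟩ := (hlim.eventually_lt_const hε).exists
  have hpos : (0 : ℝ) < 1 / ((n : ℝ) + 1) := by positivity
  have h1 := eventually_closed_lt μ (isClosed_cball x _) hn
  have h2 : ∀ᶠ x' in 𝓝 x, shiftDist x x' < 1 / ((n : ℝ) + 1) := by
    have hc : Continuous (fun x' => shiftDist x x') :=
      continuous_shiftDist.comp (Continuous.prodMk_right x)
    apply hc.continuousAt.eventually_lt_const
    simpa [shiftDist_self] using hpos
  filter_upwards [h1.prod_nhds h2] with p hp
  refine ⟨ε, hε0, hε1, (measure_mono ?_).trans_lt hp.1⟩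
  intro y (hy : shiftDist p.2 y ≤ ε)
  simp only [Set.mem_ofPred_eq]
  linarith [shiftDist_triangle x p.2 y, hp.2]

lemma isOpen_gt {O : Set (ProbabilityMeasure (ℤ → M) × (ℤ → M))} (hO : IsOpen O) (c : ℝ≥0∞) :
    IsOpen {μ : ProbabilityMeasure (ℤ → M) | c < μ.toMeasure {x | (μ, x) ∈ O}} := by
  rw [isOpen_iff_mem_nhds]
  intro μ hμ
  have hS : IsOpen {x | (μ, x) ∈ O} := hO.preimage (Continuous.prodMk_right μ)
  obtain ⟨K, hKS, hK, hKc⟩ := hS.measurableSet.exists_lt_isCompact hμ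
  obtain ⟨V, W, hV, hW, hμV, hKW, hVW⟩ := generalized_tube_lemma (isCompact_singleton (x := μ)) hK
    hO (by rintro ⟨a, b⟩ ⟨rfl, hb⟩; exact hKS hb)
  filter_upwards [hV.mem_nhds (hμV rfl),
    eventually_lt_open μ hW (hKc.trans_le (measure_mono hKW))] with ν h1 h2
  exact h2.trans_le (measure_mono fun x hx => hVW ⟨h1, hx⟩)

lemma isGδ_full {O : Set (ProbabilityMeasure (ℤ → M) × (ℤ → M))} (hO : IsOpen O) :
    IsGδ {μ : ProbabilityMeasure (ℤ → M) | ∀ᵐ x ∂μ.toMeasure, (μ, x) ∈ O} := by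
  have : {μ : ProbabilityMeasure (ℤ → M) | ∀ᵐ x ∂μ.toMeasure, (μ, x) ∈ O} =
      ⋂ n : ℕ, {μ | 1 - ((n : ℝ≥0∞) + 1)⁻¹ < μ.toMeasure {x | (μ, x) ∈ O}} := by
    ext μ
    have hS : IsOpen {x | (μ, x) ∈ O} := hO.preimage (Continuous.prodMk_right μ)
    simp only [mem_iInter, Set.mem_ofPred_eq]
    have := prob_compl_eq_zero_iff (μ := μ.toMeasure) hS.measurableSet
    rw [ae_iff]
    change μ.toMeasure {x | (μ, x) ∈ O}ᶜ = 0 ↔ _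
    rw [this]
    constructor
    · intro h n
      rw [h]
      exact ENNReal.sub_lt_self (by simp) (by simp) (by simp)
    · intro h
      refine le_antisymm prob_le_one ?_
      refine le_of_tendsto' (x := atTop) ?_ (fun n => (h n).le)
      have : Tendsto (fun n : ℕ => ((n : ℝ≥0∞) + 1)⁻¹) atTop (𝓝 0) := by
        have := (tendsto_add_atTop_iff_nat 1).2 ENNReal.tendsto_inv_nat_nhds_zero
        simpa using this
      simpa using ENNReal.Tendsto.sub tendsto_const_nhds this (Or.inl ENNReal.one_ne_top)
  rw [this]
  exact IsGδ.iInter_of_isOpen fun n => isOpen_gt hO _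

lemma isGδ_PD :
    IsGδ {μ : {ν : ProbabilityMeasure (ℤ → M) // ν.toMeasure.map fullShift = ν.toMeasure} |
        ∀ᵐ x ∂μ.1.toMeasure, upperLocalDim shiftDist μ.1.toMeasure x = ⊤} := by
  have h : IsGδ {μ : ProbabilityMeasure (ℤ → M) |
      ∀ᵐ x ∂μ.toMeasure, upperLocalDim shiftDist μ.toMeasure x = ⊤} := by
    have : {μ : ProbabilityMeasure (ℤ → M) |
      ∀ᵐ x ∂μ.toMeasure, upperLocalDim shiftDist μ.toMeasure x = ⊤} =
      ⋂ k : ℕ, {μ : ProbabilityMeasure (ℤ → M) | ∀ᵐ x ∂μ.toMeasure, (μ, x) ∈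
        {p : ProbabilityMeasure (ℤ → M) × (ℤ → M) | Small shiftDist k p.1.toMeasure p.2}} := by
      ext μ
      simp only [mem_iInter, Set.mem_ofPred_eq, upperLocalDim_eq_top_iff, ae_all_iff]
    rw [this]
    exact IsGδ.iInter fun k => isGδ_full (isOpen_small k)
  exact h.preimage continuous_subtype_val

end gdelta

section dens

lemma exists_radius {M : Type*} [MetricSpace M] [CompleteSpace M]
    [TopologicalSpace.SeparableSpace M] [MeasurableSpace M] [BorelSpace M]
    (ν : Measure M) [IsFiniteMeasure ν] (h0 : ∀ x, ν {x} = 0) {c : ℝ≥0∞} (hc : c ≠ 0) :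
    ∃ r : ℝ, 0 < r ∧ ∀ y, ν (ball y r) ≤ c := by
  obtain ⟨K, -, hK, hKc⟩ := MeasurableSet.univ.exists_isCompact_sdiff_lt (μ := ν)
    (measure_ne_top _ _) hc
  have hs : ∀ z : M, ∃ s : ℝ, 0 < s ∧ ν (ball z s) ≤ c := by
    intro z
    have hlim : Tendsto (fun n : ℕ => ν (ball z (1 / ((n : ℝ) + 1)))) atTop
        (𝓝 (ν (⋂ n : ℕ, ball z (1 / ((n : ℝ) + 1))))) := by
      apply tendsto_measure_iInter_atTop
      · exact fun n => measurableSet_ball.nullMeasurableSet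
      · intro m n hmn
        apply ball_subset_ball
        gcongr
      · exact ⟨0, measure_ne_top _ _⟩
    have heq : (⋂ n : ℕ, ball z (1 / ((n : ℝ) + 1))) = {z} := by
      ext y
      simp only [mem_iInter, mem_ball, mem_singleton_iff]
      constructor
      · intro h
        rw [← dist_le_zero]
        exact ge_of_tendsto' (tendsto_one_div_add_atTop_nhds_zero_nat (𝕜 := ℝ)) fun n => (h n).le
      · rintro rfl n
        rw [dist_self]
        positivity
    rw [heq, h0] at hlim
    obtain ⟨n, hn⟩ := (hlim.eventually_lt_const (pos_iff_ne_zero.2 hc)).exists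
    exact ⟨_, by positivity, hn.le⟩
  choose s hs0 hs using hs
  obtain ⟨δ, hδ, hδK⟩ := lebesgue_number_lemma_of_metric (c := fun z => ball z (s z)) hK
    (fun z => isOpen_ball) (fun z _ => mem_iUnion.2 ⟨z, mem_ball_self (hs0 z)⟩)
  refine ⟨δ / 2, by positivity, fun y => ?_⟩
  by_cases hy : ∃ z ∈ K, z ∈ ball y (δ / 2)
  · obtain ⟨z, hzK, hz⟩ := hy
    obtain ⟨w, hw⟩ := hδK z hzK
    refine (measure_mono (Subset.trans ?_ hw)).trans (hs w)
    intro p hp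
    rw [mem_ball] at *
    linarith [dist_triangle p y z, dist_comm z y]
  · push Not at hy
    refine (measure_mono ?_).trans hKc.le
    exact fun p hp => ⟨mem_univ _, fun hpK => hy p hpK hp⟩

lemma exists_inj {M : Type*} [MetricSpace M] [CompleteSpace M]
    [TopologicalSpace.SeparableSpace M] [PerfectSpace M] [MeasurableSpace M] [BorelSpace M]
    (a : M) {δ : ℝ} (hδ : 0 < δ) :
    ∃ g : unitInterval → M, Measurable g ∧ Function.Injective g ∧ ∀ u, dist (g u) a ≤ δ := by
  have hp : Preperfect (ball a δ ∩ univ) :=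
    (PerfectSpace.univ_preperfect (α := M)).open_inter isOpen_ball
  have hP := hp.perfect_closure
  obtain ⟨f, hf, -, hfi⟩ := hP.exists_nat_bool_injection
    ⟨a, subset_closure ⟨mem_ball_self hδ, mem_univ _⟩⟩
  have hsub : closure (ball a δ ∩ univ) ⊆ closedBall a δ := by
    rw [inter_univ]; exact closure_ball_subset_closedBall
  have : StandardBorelSpace (closedBall a δ) := measurableSet_closedBall.standardBorel
  have h1 : ¬ Countable (closedBall a δ) := by
    intro hc
    have : Function.Injective (fun v : ℕ → Bool =>
      (⟨f v, hsub (hf (mem_range_self v))⟩ : closedBall a δ)) := by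
      intro v w hvw
      exact hfi (congrArg Subtype.val hvw)
    have := this.countable
    have h3 := Cardinal.mk_le_aleph0_iff.2 this
    simp only [Cardinal.mk_pi, Cardinal.mk_fintype, Fintype.card_bool, Cardinal.prod_const] at h3
    simp at h3
    exact absurd h3 (not_le.2 (Cardinal.cantor _))
  have h2 : ¬ Countable unitInterval := by
    intro hc
    have : (unitInterval : Set ℝ).Countable := hc
    exact (Cardinal.mk_Icc_real (zero_lt_one)).not_lt (by
      exact lt_of_le_of_lt (Cardinal.le_aleph0_iff_set_countable.2 this) Cardinal.aleph0_lt_continuum)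
  let e := PolishSpace.measurableEquivOfNotCountable h2 h1
  exact ⟨fun u => (e u : M), measurable_subtype_coe.comp e.measurable,
    Subtype.val_injective.comp e.injective, fun u => (e u).2⟩

variable {M : Type*} [MetricSpace M] [CompleteSpace M]
    [TopologicalSpace.SeparableSpace M] [MeasurableSpace M] [BorelSpace M]

/-- The random perturbation map. -/
def pert (j : M → ℕ) (g : ℕ → unitInterval → M) (p : (ℤ → M) × (ℤ → unitInterval)) : ℤ → M :=
  fun n => g (j (p.1 n)) (p.2 n)

/-- The iid uniform noise. -/
noncomputable def noise : Measure (ℤ → unitInterval) :=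
  Measure.infinitePi (fun _ => (volume : Measure unitInterval))

instance : IsProbabilityMeasure noise := by unfold noise; infer_instance

lemma measurable_fullShift {A : Type*} [MeasurableSpace A] :
    Measurable (fullShift : (ℤ → A) → (ℤ → A)) := by
  unfold fullShift; fun_prop

lemma noise_shift : noise.map fullShift = noise := by
  unfold noise
  refine Measure.eq_infinitePi _ fun s t ht => ?_
  rw [Measure.map_apply measurable_fullShift (.pi s.countable_toSet fun i _ => ht i)]
  have : fullShift ⁻¹' ((s : Set ℤ).pi t) =
      ((s.map (Equiv.subRight (1 : ℤ)).toEmbedding : Finset ℤ) : Set ℤ).pi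
        (fun i => t (i + 1)) := by
    ext x
    simp [fullShift, Set.mem_pi]
  rw [this, Measure.infinitePi_pi _ (fun i _ => ht _)]
  simp

lemma measurable_pert {j : M → ℕ} (hj : Measurable j) {g : ℕ → unitInterval → M}
    (hg : ∀ i, Measurable (g i)) : Measurable (pert j g) := by
  rw [measurable_pi_iff]
  intro n
  have h1 : Measurable (fun q : ℕ × unitInterval => g q.1 q.2) :=
    measurable_from_prod_countable_right hg
  have h2 : Measurable (fun p : (ℤ → M) × (ℤ → unitInterval) => (j (p.1 n), p.2 n)) :=
    (hj.comp ((measurable_pi_apply n).comp measurable_fst)).prodMk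
      ((measurable_pi_apply n).comp measurable_snd)
  exact h1.comp h2

lemma pert_shift {j : M → ℕ} (hj : Measurable j) {g : ℕ → unitInterval → M}
    (hg : ∀ i, Measurable (g i)) (μ : Measure (ℤ → M)) [IsProbabilityMeasure μ]
    (hμ : μ.map fullShift = μ) :
    ((μ.prod noise).map (pert j g)).map fullShift = (μ.prod noise).map (pert j g) := by
  have h1 : MeasurePreserving fullShift μ μ := ⟨measurable_fullShift, hμ⟩
  have h2 : MeasurePreserving fullShift noise noise := ⟨measurable_fullShift, noise_shift⟩
  have h3 := h1.prod h2
  rw [Measure.map_map measurable_fullShift (measurable_pert hj hg)]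
  have : fullShift ∘ pert j g = pert j g ∘ Prod.map fullShift fullShift := rfl
  rw [this, ← Measure.map_map (measurable_pert hj hg) h3.measurable, h3.map_eq]

lemma pert_bound {j : M → ℕ} (hj : Measurable j) {g : ℕ → unitInterval → M}
    (hg : ∀ i, Measurable (g i)) (μ : Measure (ℤ → M)) [IsProbabilityMeasure μ]
    {c : ℝ≥0∞} {r : ℝ} (hr : 0 < r)
    (hrc : ∀ x y, (volume : Measure unitInterval) {u | dist (g (j x) u) y < r} ≤ c)
    (N : ℕ) (y : ℤ → M) :
    (μ.prod noise).map (pert j g) {z | shiftDist y z ≤ (1 / 2 : ℝ) ^ N * (r / (1 + r))} ≤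
      c ^ N := by
  have hF := (isClosed_cball y ((1 / 2 : ℝ) ^ N * (r / (1 + r)))).measurableSet
  rw [Measure.map_apply (measurable_pert hj hg) hF,
    Measure.prod_apply (measurable_pert hj hg hF)]
  have key : ∀ x : ℤ → M, noise (Prod.mk x ⁻¹' (pert j g ⁻¹'
      {z | shiftDist y z ≤ (1 / 2 : ℝ) ^ N * (r / (1 + r))})) ≤ c ^ N := by
    intro x
    set S : Finset ℤ := (Finset.range N).map Nat.castEmbedding
    have hsub : (Prod.mk x ⁻¹' (pert j g ⁻¹'
      {z | shiftDist y z ≤ (1 / 2 : ℝ) ^ N * (r / (1 + r))})) ⊆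
        (S : Set ℤ).pi (fun n => {u | dist (g (j (x n)) u) (y n) < r}) := by
      intro u hu n hn
      simp only [S, Finset.coe_map, Nat.castEmbedding_apply, mem_image, Finset.mem_coe,
        Finset.mem_range] at hn
      obtain ⟨m, hm, rfl⟩ := hn
      exact shiftDist_le_imp y _ hr hm hu
    refine (measure_mono hsub).trans ?_
    unfold noise
    rw [Measure.infinitePi_pi]
    · refine (Finset.prod_le_pow_card _ _ c fun n _ => hrc _ _).trans ?_
      simp [S]
    · intro n _
      exact measurableSet_lt ((hg _).dist measurable_const) measurable_const
  calc _ ≤ ∫⁻ _, c ^ N ∂μ := lintegral_mono key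
    _ = c ^ N := by simp

lemma pert_small {j : M → ℕ} (hj : Measurable j) {g : ℕ → unitInterval → M}
    (hg : ∀ i, Measurable (g i)) (μ : Measure (ℤ → M)) [IsProbabilityMeasure μ]
    (hb : ∀ c : ℝ≥0∞, c ≠ 0 → ∃ r : ℝ, 0 < r ∧
      ∀ x y, (volume : Measure unitInterval) {u | dist (g (j x) u) y < r} ≤ c)
    (k : ℕ) (y : ℤ → M) : Small shiftDist k ((μ.prod noise).map (pert j g)) y := by
  obtain ⟨r, hr, hrc⟩ := hb (ENNReal.ofReal ((1 / 2) ^ (2 * k + 1))) (by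
    simp only [ne_eq, ENNReal.ofReal_eq_zero, not_le]; positivity)
  have hq : 0 < r / (1 + r) := by positivity
  have hq1 : r / (1 + r) < 1 := by rw [div_lt_one (by positivity)]; linarith
  set q := r / (1 + r) with hqd
  obtain ⟨N, hN⟩ := exists_pow_lt_of_lt_one (y := (1 / 2 : ℝ))
    (lt_min hq (show (0 : ℝ) < 1 / (k + 2) by positivity)) (by norm_num)
  have hs : 0 < (1 / 2 : ℝ) ^ N := by positivity
  have hb := pert_bound hj hg μ hr hrc N y
  rw [← ENNReal.ofReal_pow (by positivity), ← pow_mul, mul_comm (2 * k + 1), pow_mul,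
    ← hqd] at hb
  set s := (1 / 2 : ℝ) ^ N
  have hsq := hN.trans_le (min_le_left _ _)
  have hsk := hN.trans_le (min_le_right _ _)
  refine ⟨s * q, by positivity, by nlinarith, hb.trans_lt ?_⟩
  rw [ENNReal.ofReal_lt_ofReal_iff (by positivity)]
  have h1 : s ^ k ≤ q ^ k := by gcongr
  have h2 : 0 < s ^ k := by positivity
  calc s ^ (2 * k + 1) = (s ^ k * s ^ k) * s := by ring
    _ < (s ^ k * s ^ k) * 1 := by gcongr; linarith
    _ ≤ (s * q) ^ k := by rw [mul_one, mul_pow]; gcongr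

lemma dense_PD [PerfectSpace M] :
    Dense {μ : {ν : ProbabilityMeasure (ℤ → M) // ν.toMeasure.map fullShift = ν.toMeasure} |
        ∀ᵐ x ∂μ.1.toMeasure, upperLocalDim shiftDist μ.1.toMeasure x = ⊤} := by
  intro μ
  have hne : Nonempty M := by
    obtain ⟨x⟩ : Nonempty (ℤ → M) := μ.1.toMeasure.nonempty_of_neZero
    exact ⟨x 0⟩
  set e : ℕ → M := TopologicalSpace.denseSeq M
  have hδ : ∀ k : ℕ, (0 : ℝ) < 1 / ((k : ℝ) + 1) := fun k => by positivity
  choose g hgm hgi hgd using fun k i : ℕ => exists_inj (e i) (hδ k)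
  set j : ℕ → M → ℕ := fun k => SimpleFunc.nearestPtInd e k
  have hj : ∀ k, Measurable (j k) := fun k => (SimpleFunc.nearestPtInd e k).measurable
  have hpm : ∀ k, Measurable (pert (j k) (g k)) := fun k => measurable_pert (hj k) (hgm k)
  have hprob : ∀ k, IsProbabilityMeasure ((μ.1.toMeasure.prod noise).map (pert (j k) (g k))) :=
    fun k => Measure.isProbabilityMeasure_map (hpm k).aemeasurable
  let ν : ℕ → {ν : ProbabilityMeasure (ℤ → M) // ν.toMeasure.map fullShift = ν.toMeasure} :=
    fun k => ⟨⟨(μ.1.toMeasure.prod noise).map (pert (j k) (g k)), hprob k⟩,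
      pert_shift (hj k) (hgm k) _ μ.2⟩
  have hb : ∀ k, ∀ c : ℝ≥0∞, c ≠ 0 → ∃ r : ℝ, 0 < r ∧
      ∀ x y, (volume : Measure unitInterval) {u | dist (g k (j k x) u) y < r} ≤ c := by
    intro k c hc
    have h1 : ∀ i : ℕ, ∃ r : ℝ, 0 < r ∧
        ∀ y, (volume : Measure unitInterval) {u | dist (g k i u) y < r} ≤ c := by
      intro i
      have : IsFiniteMeasure ((volume : Measure unitInterval).map (g k i)) := by infer_instance
      obtain ⟨r, hr, h⟩ := exists_radius ((volume : Measure unitInterval).map (g k i))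
        (fun x => by
          rw [Measure.map_apply (hgm k i) (measurableSet_singleton x)]
          exact (subsingleton_singleton.preimage (hgi k i)).measure_zero _) hc
      refine ⟨r, hr, fun y => ?_⟩
      have := h y
      rwa [Measure.map_apply (hgm k i) measurableSet_ball] at this
    choose r hr hrc using h1
    have hne : (Finset.range (k + 1)).Nonempty := ⟨0, by simp⟩
    refine ⟨(Finset.range (k + 1)).inf' hne r, (Finset.lt_inf'_iff _).2 fun i _ => hr i,
      fun x y => ?_⟩
    refine (measure_mono ?_).trans (hrc (j k x) y)
    intro u (hu : dist (g k (j k x) u) y < (Finset.range (k + 1)).inf' hne r)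
    refine lt_of_lt_of_le hu (Finset.inf'_le _ ?_)
    exact Finset.mem_range.2 (Nat.lt_succ_of_le (SimpleFunc.nearestPtInd_le e k x))
  have hlim : Tendsto ν atTop (𝓝 μ) := by
    rw [tendsto_subtype_rng, ProbabilityMeasure.tendsto_iff_forall_integral_tendsto]
    intro f
    have h1 : ∀ k, ∫ ω, f ω ∂(ν k).1.toMeasure =
        ∫ p, f (pert (j k) (g k) p) ∂(μ.1.toMeasure.prod noise) := by
      intro k
      exact integral_map (hpm k).aemeasurable f.continuous.measurable.aestronglyMeasurable
    have h2 : ∫ ω, f ω ∂μ.1.toMeasure = ∫ p, f p.1 ∂(μ.1.toMeasure.prod noise) := by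
      rw [integral_fun_fst]; simp
    simp only [h1, h2]
    refine tendsto_integral_of_dominated_convergence (fun _ => ‖f‖) (fun k => ?_)
      (integrable_const _) (fun k => ?_) ?_
    · exact (f.continuous.measurable.comp (hpm k)).aestronglyMeasurable
    · exact ae_of_all _ fun p => f.norm_coe_le_norm _
    · refine ae_of_all _ fun p => (f.continuous.tendsto _).comp ?_
      rw [tendsto_pi_nhds]
      intro n
      have h3 := SimpleFunc.tendsto_nearestPt (e := e) (x := p.1 n)
        (by rw [(TopologicalSpace.denseRange_denseSeq M).closure_range]; trivial)
      rw [tendsto_iff_dist_tendsto_zero] at h3 ⊢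
      have h4 := (tendsto_one_div_add_atTop_nhds_zero_nat (𝕜 := ℝ)).add h3
      rw [add_zero] at h4
      refine squeeze_zero (fun _ => dist_nonneg) (fun k => ?_) h4
      refine (dist_triangle _ (e (j k (p.1 n))) _).trans ?_
      exact add_le_add (hgd k _ _) le_rfl
  refine mem_closure_of_tendsto hlim (Eventually.of_forall fun k => ?_)
  refine ae_of_all _ fun y => ?_
  rw [upperLocalDim_eq_top_iff]
  exact fun m => pert_small (hj k) (hgm k) _ (hb k) m y

end dens

end ShiftPD

/-- For the full shift on `ℤ → M` over a perfect Polish metric space `M`,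
the set `PD` of invariant measures whose upper local dimension is infinite almost everywhere
(equivalently, with packing dimension `+∞`) is a dense `Gδ` subset of `M(T)`. -/
theorem fullShift_packingDimInfinite_denseGδ {M : Type*} [MetricSpace M] [CompleteSpace M]
    [TopologicalSpace.SeparableSpace M] [PerfectSpace M]
    [MeasurableSpace M] [BorelSpace M] :
    IsGδ {μ : {ν : ProbabilityMeasure (ℤ → M) // ν.toMeasure.map fullShift = ν.toMeasure} |
        ∀ᵐ x ∂μ.1.toMeasure, upperLocalDim shiftDist μ.1.toMeasure x = ⊤} ∧
    Dense {μ : {ν : ProbabilityMeasure (ℤ → M) // ν.toMeasure.map fullShift = ν.toMeasure} |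
        ∀ᵐ x ∂μ.1.toMeasure, upperLocalDim shiftDist μ.1.toMeasure x = ⊤} := by
  exact ⟨ShiftPD.isGδ_PD, ShiftPD.dense_PD⟩
end

section
/- For the full shift T on X = ∏_{n∈ℤ} M over a perfect Polish metric space M, the set {μ ∈ M(T) : R̲(x) = 0 for μ-a.e. x ∈ X} of invariant measures whose lower recurrence rate vanishes almost everywhere is a dense Gδ subset of M(T). -/
open Filter MeasureTheory Topology Metric Set
open scoped ENNReal NNReal

noncomputable section
attribute [local instance] Classical.propDecidable

end

section Helpers

variable {M : Type*}

lemma fullShift_iterate (n : ℕ) (x : ℤ → M) (i : ℤ) : (fullShift^[n] x) i = x (i - n) := by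
  induction n generalizing i with
  | zero => simp
  | succ n ih =>
    rw [Function.iterate_succ_apply']
    simp only [fullShift]
    rw [ih]
    congr 1
    push_cast
    ring

lemma continuous_fullShift [TopologicalSpace M] : Continuous (fullShift : (ℤ → M) → (ℤ → M)) := by
  unfold fullShift
  fun_prop

lemma summable_weights : Summable (fun n : ℤ => (1 / 2 : ℝ) ^ n.natAbs) := by
  apply Summable.of_nat_of_neg
  · simpa using summable_geometric_two
  · simpa using summable_geometric_two

lemma continuous_shiftDist_iterate [MetricSpace M] (n : ℕ) :
    Continuous (fun x : ℤ → M => shiftDist (fullShift^[n] x) x) := by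
  unfold shiftDist
  simp only [fullShift_iterate]
  refine continuous_tsum (u := fun n : ℤ => (1 / 2 : ℝ) ^ n.natAbs) ?_ summable_weights ?_
  · intro i
    refine continuous_const.mul (Continuous.div (by fun_prop) (by fun_prop) ?_)
    intro x
    have : 0 ≤ dist (x (i - n)) (x i) := dist_nonneg
    positivity
  · intro i x
    have h : 0 ≤ dist (x (i - n)) (x i) := dist_nonneg
    rw [Real.norm_of_nonneg (by positivity)]
    apply mul_le_of_le_one_right (by positivity)
    rw [div_le_one (by positivity)]
    linarith

/-- Points with a quantitatively good return. -/
def goodSet (M : Type*) [MetricSpace M] (k : ℕ) : Set (ℤ → M) :=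
  ⋃ (n : ℕ) (_ : 1 ≤ n) (r : ℝ) (_ : 0 < r ∧ r < 1 / (k + 1 : ℝ) ∧ (n : ℝ) ^ (k + 1) * r < 1),
    {x | shiftDist (fullShift^[n] x) x < r}

lemma mem_goodSet [MetricSpace M] {k : ℕ} {x : ℤ → M} :
    x ∈ goodSet M k ↔ ∃ n : ℕ, 1 ≤ n ∧ ∃ r : ℝ,
      (0 < r ∧ r < 1 / (k + 1 : ℝ) ∧ (n : ℝ) ^ (k + 1) * r < 1) ∧
      shiftDist (fullShift^[n] x) x < r := by
  simp only [goodSet, mem_iUnion, mem_ofPred_eq, exists_prop]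

lemma isOpen_goodSet [MetricSpace M] (k : ℕ) : IsOpen (goodSet M k) :=
  isOpen_iUnion fun n => isOpen_iUnion fun _ => isOpen_iUnion fun _ => isOpen_iUnion fun _ =>
    isOpen_lt (continuous_shiftDist_iterate n) continuous_const

lemma recRatio_le {X : Type*} {d : X → X → ℝ} {T : X → X} {x : X} {r : ℝ} {n : ℕ} (hn : 1 ≤ n)
    (h : d (T^[n] x) x ≤ r) (hr0 : 0 < r) (hr : r < 1) :
    recRatio d T x r ≤ ENNReal.ofReal (Real.log n / (- Real.log r)) := by
  have hex : ∃ n : ℕ, 1 ≤ n ∧ d (T^[n] x) x ≤ r := ⟨n, hn, h⟩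
  unfold recRatio
  rw [if_pos hex]
  apply ENNReal.ofReal_le_ofReal
  have hlog : Real.log r < 0 := Real.log_neg hr0 hr
  have hmem := Nat.sInf_mem (s := {n : ℕ | 1 ≤ n ∧ d (T^[n] x) x ≤ r}) hex
  have hle : sInf {n : ℕ | 1 ≤ n ∧ d (T^[n] x) x ≤ r} ≤ n := Nat.sInf_le ⟨hn, h⟩
  apply div_le_div_of_nonneg_right _ (by linarith)
  apply Real.log_le_log
  · exact_mod_cast hmem.1
  · exact_mod_cast hle

lemma lowerRecRate_eq_zero_iff [MetricSpace M] (x : ℤ → M) :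
    lowerRecRate shiftDist fullShift x = 0 ↔ ∀ k, x ∈ goodSet M k := by
  constructor
  · intro h k
    have hlt : lowerRecRate shiftDist fullShift x < ENNReal.ofReal (1 / (k + 1 : ℝ)) := by
      rw [h]; exact ENNReal.ofReal_pos.2 (by positivity)
    have hfr := frequently_lt_of_liminf_lt (by isBoundedDefault) hlt
    have hev : ∀ᶠ r in 𝓝[>] (0 : ℝ), r ∈ Ioo (0 : ℝ) (1 / (k + 1 : ℝ)) :=
      Ioo_mem_nhdsGT (by positivity)
    obtain ⟨r, hr, hr0, hrk⟩ := (hfr.and_eventually hev).exists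
    have hk1 : 1 / (k + 1 : ℝ) ≤ 1 := by
      rw [div_le_one (by positivity)]; linarith [(Nat.cast_nonneg k : (0 : ℝ) ≤ k)]
    have hr1 : r < 1 := hrk.trans_le hk1
    have hlog : Real.log r < 0 := Real.log_neg hr0 hr1
    unfold recRatio at hr
    split_ifs at hr with hex
    · have hmem := Nat.sInf_mem (s := {n : ℕ | 1 ≤ n ∧ shiftDist (fullShift^[n] x) x ≤ r}) hex
      set n := sInf {n : ℕ | 1 ≤ n ∧ shiftDist (fullShift^[n] x) x ≤ r} with hn
      have hn1 : 1 ≤ n := hmem.1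
      have hnd : shiftDist (fullShift^[n] x) x ≤ r := hmem.2
      have hn0 : (0 : ℝ) < n := by exact_mod_cast hn1
      rw [ENNReal.ofReal_lt_ofReal_iff (by positivity), div_lt_div_iff₀ (by linarith) (by positivity)]
        at hr
      have hprod : (n : ℝ) ^ (k + 1) * r < 1 := by
        rw [← Real.log_neg_iff (by positivity), Real.log_mul (by positivity) hr0.ne', Real.log_pow]
        push_cast
        linarith
      have hnk : 0 < (n : ℝ) ^ (k + 1) := by positivity
      have hb : r < min (1 / (k + 1 : ℝ)) (1 / (n : ℝ) ^ (k + 1)) := by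
        apply lt_min hrk
        rw [lt_div_iff₀ hnk]; linarith
      obtain ⟨s, hrs, hs⟩ := exists_between hb
      refine mem_goodSet.2 ⟨n, hn1, s, ⟨hr0.trans hrs, hs.trans_le (min_le_left _ _), ?_⟩,
        hnd.trans_lt hrs⟩
      have := hs.trans_le (min_le_right _ _)
      rw [lt_div_iff₀ hnk] at this
      linarith
    · exact absurd hr (by simp)
  · intro h
    refine le_antisymm ?_ (zero_le)
    refine ENNReal.le_of_forall_pos_le_add ?_
    intro ε hε _
    rw [zero_add]
    apply liminf_le_of_frequently_le'
    rw [(nhdsGT_basis (0 : ℝ)).frequently_iff]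
    intro a ha
    have hε' : (0 : ℝ) < ε := by exact_mod_cast hε
    obtain ⟨k, hk⟩ := exists_nat_one_div_lt (lt_min ha hε')
    obtain ⟨n, hn1, r, ⟨hr0, hrk, hnr⟩, hd⟩ := mem_goodSet.1 (h k)
    have hk1 : 1 / (k + 1 : ℝ) ≤ 1 := by
      rw [div_le_one (by positivity)]; linarith [(Nat.cast_nonneg k : (0 : ℝ) ≤ k)]
    have hr1 : r < 1 := hrk.trans_le hk1
    have hlog : Real.log r < 0 := Real.log_neg hr0 hr1
    have hn0 : (0 : ℝ) < n := by exact_mod_cast hn1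
    refine ⟨r, ⟨hr0, hrk.trans (hk.trans_le (min_le_left _ _))⟩, ?_⟩
    refine (recRatio_le hn1 hd.le hr0 hr1).trans ?_
    rw [← ENNReal.ofReal_coe_nnreal]
    apply ENNReal.ofReal_le_ofReal
    refine le_trans ?_ (hk.trans_le (min_le_right _ _)).le
    rw [div_le_div_iff₀ (by linarith) (by positivity)]
    rw [← Real.log_neg_iff (by positivity), Real.log_mul (by positivity) hr0.ne', Real.log_pow] at hnr
    push_cast at hnr
    linarith

lemma lowerRecRate_periodic [MetricSpace M] (x : ℤ → M) (n : ℕ) (hn : 1 ≤ n)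
    (hx : fullShift^[n] x = x) : lowerRecRate shiftDist fullShift x = 0 := by
  rw [lowerRecRate_eq_zero_iff]
  intro k
  have hn0 : (0 : ℝ) < n := by exact_mod_cast hn
  have hb : (0 : ℝ) < min (1 / (k + 1 : ℝ)) (1 / (n : ℝ) ^ (k + 1)) := by positivity
  obtain ⟨s, h0, hs⟩ := exists_between hb
  refine mem_goodSet.2 ⟨n, hn, s, ⟨h0, hs.trans_le (min_le_left _ _), ?_⟩, ?_⟩
  · have := hs.trans_le (min_le_right _ _)
    rw [lt_div_iff₀ (by positivity)] at this
    linarith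
  · rw [hx]; simpa [shiftDist] using h0

/-- Periodization: repeat the block of `y` on `[k - N, k)` with period `N`. -/
def periodize (N k : ℕ) (y : ℤ → M) : ℤ → M := fun i => y ((i - k) % N + k - N)

lemma continuous_periodize [TopologicalSpace M] (N k : ℕ) :
    Continuous (periodize N k : (ℤ → M) → (ℤ → M)) := by
  unfold periodize
  fun_prop

lemma periodize_apply_eq (N k : ℕ) (y : ℤ → M) (i : ℤ) (h1 : (k : ℤ) - N ≤ i) (h2 : i < k) :
    periodize N k y i = y i := by
  unfold periodize
  congr 1
  have : (i - k) % (N : ℤ) = i - k + N := by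
    rw [← Int.add_emod_right]
    exact Int.emod_eq_of_lt (by linarith) (by linarith)
  rw [this]; ring

lemma periodize_periodic (N k : ℕ) (y : ℤ → M) :
    fullShift^[N] (periodize N k y) = periodize N k y := by
  ext i
  rw [fullShift_iterate]
  unfold periodize
  congr 3
  rw [show i - (N : ℤ) - k = (i - k) - N by ring, Int.sub_emod_right]

lemma fullShift_periodize (N k : ℕ) (y : ℤ → M) :
    fullShift (periodize N k y) = periodize N (k + 1) (fullShift y) := by
  ext i
  unfold periodize fullShift
  push_cast
  rw [show i - ((k : ℤ) + 1) = i - 1 - k by ring]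
  congr 1
  ring

lemma periodize_self (N : ℕ) (y : ℤ → M) :
    periodize N N (fullShift^[N] y) = periodize N 0 y := by
  ext i
  unfold periodize
  rw [fullShift_iterate]
  congr 1
  simp

variable [MetricSpace M] [TopologicalSpace.SeparableSpace M] [MeasurableSpace M] [BorelSpace M]

lemma isOpen_measure_gt (U : Set (ℤ → M)) (hU : IsOpen U) (c : ℝ≥0∞) :
    IsOpen {μ : ProbabilityMeasure (ℤ → M) | c < μ.toMeasure U} := by
  rw [isOpen_iff_mem_nhds]
  intro μ hμ
  have h := ProbabilityMeasure.le_liminf_measure_open_of_tendsto (tendsto_id (α := ProbabilityMeasure (ℤ → M)) (x := 𝓝 μ)) hU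
  exact eventually_lt_of_lt_liminf (lt_of_lt_of_le hμ h)

/-- Averaged periodized measure. -/
noncomputable def perMeasure (N : ℕ) (μ : Measure (ℤ → M)) : Measure (ℤ → M) :=
  (N : ℝ≥0∞)⁻¹ • ∑ k ∈ Finset.range N, μ.map (periodize N k)

lemma map_iterate_eq {μ : Measure (ℤ → M)} (h : μ.map fullShift = μ) (n : ℕ) :
    μ.map (fullShift^[n]) = μ :=
  ((⟨continuous_fullShift.measurable, h⟩ : MeasurePreserving fullShift μ μ).iterate n).map_eq

lemma perMeasure_invariant (N : ℕ) {μ : Measure (ℤ → M)} [IsProbabilityMeasure μ]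
    (h : μ.map fullShift = μ) :
    (perMeasure N μ).map fullShift = perMeasure N μ := by
  have hT : Measurable (fullShift : (ℤ → M) → (ℤ → M)) := continuous_fullShift.measurable
  have hP : ∀ k, Measurable (periodize N k : (ℤ → M) → (ℤ → M)) :=
    fun k => (continuous_periodize N k).measurable
  have h1 : ∀ k, (μ.map (periodize N k)).map fullShift = μ.map (periodize N (k + 1)) := by
    intro k
    rw [Measure.map_map hT (hP k)]
    have : fullShift ∘ periodize N k = periodize N (k + 1) ∘ (fullShift : (ℤ → M) → (ℤ → M)) := by
      ext1 y; exact fullShift_periodize N k y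
    rw [this, ← Measure.map_map (hP _) hT, h]
  have h2 : μ.map (periodize N N) = μ.map (periodize N 0) := by
    have : periodize N N ∘ (fullShift^[N] : (ℤ → M) → (ℤ → M)) = periodize N 0 := by
      ext1 y; exact periodize_self N y
    rw [← this, ← Measure.map_map (hP _) (hT.iterate N), map_iterate_eq h]
  unfold perMeasure
  rw [Measure.map_smul, ← Measure.mapₗ_apply_of_measurable hT, map_sum]
  simp only [Measure.mapₗ_apply_of_measurable hT, h1]
  congr 1
  have e1 := Finset.sum_range_succ (fun k => μ.map (periodize N k)) N
  have e2 := Finset.sum_range_succ' (fun k => μ.map (periodize N k)) N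
  rw [e1, h2] at e2
  ext s hs
  have e3 := congrArg (fun m : Measure (ℤ → M) => m s) e2
  simp only [Measure.add_apply] at e3
  have : IsProbabilityMeasure (μ.map (periodize N 0)) :=
    Measure.isProbabilityMeasure_map (hP 0).aemeasurable
  exact ((ENNReal.add_left_inj (measure_ne_top _ s)).1 e3).symm

lemma perMeasure_prob (N : ℕ) (hN : N ≠ 0) (μ : Measure (ℤ → M)) [IsProbabilityMeasure μ] :
    IsProbabilityMeasure (perMeasure N μ) := by
  constructor
  have : ∀ k, μ.map (periodize N k) univ = 1 := fun k => by
    rw [Measure.map_apply (continuous_periodize N k).measurable MeasurableSet.univ]; simp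
  simp only [perMeasure, Measure.smul_apply, Measure.finsetSum_apply, this]
  simp only [Finset.sum_const, Finset.card_range, nsmul_eq_mul, mul_one, smul_eq_mul]
  exact ENNReal.inv_mul_cancel (by exact_mod_cast hN) (by simp)

lemma perMeasure_ae (N : ℕ) (hN : N ≠ 0) (μ : Measure (ℤ → M)) :
    ∀ᵐ x ∂(perMeasure N μ), lowerRecRate shiftDist fullShift x = 0 := by
  have hcl : MeasurableSet {x : ℤ → M | fullShift^[N] x = x} :=
    (isClosed_eq (continuous_fullShift.iterate N) continuous_id).measurableSet
  have h : ∀ᵐ x ∂(perMeasure N μ), fullShift^[N] x = x := by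
    rw [ae_iff]
    simp only [perMeasure, Measure.smul_apply, Measure.finsetSum_apply, smul_eq_mul]
    refine mul_eq_zero_of_right _ (Finset.sum_eq_zero fun k _ => ?_)
    have := hcl.compl
    rw [compl_ofPred] at this
    rw [Measure.map_apply (continuous_periodize N k).measurable this]
    simp [periodize_periodic]
  filter_upwards [h] with x hx
  exact lowerRecRate_periodic x N (Nat.one_le_iff_ne_zero.2 hN) hx

lemma tendsto_integral_periodize (μ : Measure (ℤ → M)) [IsProbabilityMeasure μ]
    (f : BoundedContinuousFunction (ℤ → M) ℝ) :
    Tendsto (fun p : ℕ × ℕ => ∫ y, f (periodize p.1 p.2 y) ∂μ)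
      (comap (fun p : ℕ × ℕ => min p.2 (p.1 - p.2)) atTop) (𝓝 (∫ y, f y ∂μ)) := by
  refine tendsto_integral_filter_of_dominated_convergence (fun _ => ‖f‖) ?_ ?_ ?_ ?_
  · refine Eventually.of_forall fun p => ?_
    exact (f.continuous.comp (continuous_periodize p.1 p.2)).measurable.aestronglyMeasurable
  · exact Eventually.of_forall fun p => Eventually.of_forall fun y => f.norm_coe_le_norm _
  · exact integrable_const _
  · refine Eventually.of_forall fun y => ?_
    refine (f.continuous.tendsto y).comp ?_
    rw [tendsto_pi_nhds]
    intro i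
    apply tendsto_const_nhds.congr'
    filter_upwards [(tendsto_comap (f := fun p : ℕ × ℕ => min p.2 (p.1 - p.2))
      (x := atTop)).eventually (eventually_gt_atTop i.natAbs)] with p hp
    rw [periodize_apply_eq] <;> omega

lemma integral_perMeasure (N : ℕ) (μ : Measure (ℤ → M)) [IsProbabilityMeasure μ]
    (f : BoundedContinuousFunction (ℤ → M) ℝ) :
    ∫ y, f y ∂(perMeasure N μ) =
      (N : ℝ)⁻¹ * ∑ k ∈ Finset.range N, ∫ y, f (periodize N k y) ∂μ := by
  unfold perMeasure
  rw [integral_smul_measure, integral_finsetSum_measure]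
  · simp only [ENNReal.toReal_inv, ENNReal.toReal_natCast, smul_eq_mul]
    congr 1
    refine Finset.sum_congr rfl fun k _ => ?_
    exact integral_map (continuous_periodize N k).measurable.aemeasurable
      f.continuous.measurable.aestronglyMeasurable
  · intro k _
    have : IsProbabilityMeasure (μ.map (periodize N k)) :=
      Measure.isProbabilityMeasure_map (continuous_periodize N k).measurable.aemeasurable
    exact f.integrable _

lemma tendsto_integral_perMeasure (μ : Measure (ℤ → M)) [IsProbabilityMeasure μ]
    (f : BoundedContinuousFunction (ℤ → M) ℝ) :
    Tendsto (fun N : ℕ => ∫ y, f y ∂(perMeasure (N + 1) μ)) atTop (𝓝 (∫ y, f y ∂μ)) := by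
  rw [Metric.tendsto_atTop]
  intro ε hε
  have h1 := (Metric.tendsto_nhds.1 (tendsto_integral_periodize μ f)) (ε / 2) (by positivity)
  rw [eventually_comap] at h1
  obtain ⟨m, hm⟩ := eventually_atTop.1 h1
  set a := ∫ y, f y ∂μ with ha
  have hbd : ∀ N k : ℕ, |∫ y, f (periodize N k y) ∂μ - a| ≤ 2 * ‖f‖ := by
    intro N k
    have e1 : ‖∫ y, f (periodize N k y) ∂μ‖ ≤ ‖f‖ := by
      simpa using norm_integral_le_of_norm_le_const (μ := μ)
        (Eventually.of_forall fun y => f.norm_coe_le_norm (periodize N k y))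
    have e2 : ‖a‖ ≤ ‖f‖ := by
      simpa using norm_integral_le_of_norm_le_const (μ := μ)
        (Eventually.of_forall fun y => f.norm_coe_le_norm y)
    calc _ ≤ ‖∫ y, f (periodize N k y) ∂μ‖ + ‖a‖ := norm_sub_le _ _
      _ ≤ _ := by linarith
  obtain ⟨N0, hN0⟩ := exists_nat_gt (2 * m * (2 * ‖f‖) / (ε / 2))
  refine ⟨N0, fun n hn => ?_⟩
  rw [integral_perMeasure]
  set N := n + 1 with hN
  have hNpos : (0 : ℝ) < N := by positivity
  have hsum : ∑ k ∈ Finset.range N, |∫ y, f (periodize N k y) ∂μ - a| ≤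
      N * (ε / 2) + 2 * m * (2 * ‖f‖) := by
    calc _ ≤ ∑ k ∈ Finset.range N, (ε / 2 + if k < m ∨ N - k < m then 2 * ‖f‖ else 0) := by
          refine Finset.sum_le_sum fun k _ => ?_
          split_ifs with hk
          · linarith [hbd N k]
          · push Not at hk
            have := hm (min k (N - k)) (le_min hk.1 hk.2) (N, k) rfl
            rw [Real.dist_eq] at this
            linarith
      _ ≤ _ := by
          rw [Finset.sum_add_distrib, ← Finset.sum_filter]
          simp only [Finset.sum_const, Finset.card_range, nsmul_eq_mul]
          have hcard : (Finset.filter (fun k => k < m ∨ N - k < m) (Finset.range N)).card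
              ≤ 2 * m := by
            calc _ ≤ (Finset.range m ∪ Finset.Ico (N - m) N).card := by
                  apply Finset.card_le_card
                  intro k
                  simp only [Finset.mem_filter, Finset.mem_range, Finset.mem_union, Finset.mem_Ico]
                  omega
              _ ≤ _ := (Finset.card_union_le _ _).trans (by simp; omega)
          have hcard' : ((Finset.filter (fun k => k < m ∨ N - k < m) (Finset.range N)).card : ℝ)
              ≤ 2 * m := by exact_mod_cast hcard
          gcongr
  have hkey : (N : ℝ)⁻¹ * ∑ k ∈ Finset.range N, ∫ y, f (periodize N k y) ∂μ - a =
      (N : ℝ)⁻¹ * ∑ k ∈ Finset.range N, (∫ y, f (periodize N k y) ∂μ - a) := by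
    rw [Finset.sum_sub_distrib]
    simp only [Finset.sum_const, Finset.card_range, nsmul_eq_mul]
    field_simp
  rw [Real.dist_eq, hkey, abs_mul, abs_of_pos (inv_pos.2 hNpos), inv_mul_lt_iff₀ hNpos]
  have hlt : 2 * m * (2 * ‖f‖) < N * (ε / 2) := by
    rw [div_lt_iff₀ (by positivity)] at hN0
    have : (N0 : ℝ) ≤ N := by exact_mod_cast (by omega : N0 ≤ N)
    nlinarith
  calc _ ≤ ∑ k ∈ Finset.range N, |∫ y, f (periodize N k y) ∂μ - a| :=
        Finset.abs_sum_le_sum_abs _ _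
    _ ≤ _ := hsum
    _ < N * ε := by linarith

end Helpers

/-- For the full shift on `ℤ → M` over a perfect Polish metric space `M`,
the set of invariant measures whose lower recurrence rate vanishes almost everywhere is a
dense `Gδ` subset of `M(T)`. -/
theorem fullShift_lowerRecRateZero_denseGδ {M : Type*} [MetricSpace M] [CompleteSpace M]
    [TopologicalSpace.SeparableSpace M] [PerfectSpace M]
    [MeasurableSpace M] [BorelSpace M] :
    IsGδ {μ : {ν : ProbabilityMeasure (ℤ → M) // ν.toMeasure.map fullShift = ν.toMeasure} |
        ∀ᵐ x ∂μ.1.toMeasure, lowerRecRate shiftDist fullShift x = 0} ∧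
    Dense {μ : {ν : ProbabilityMeasure (ℤ → M) // ν.toMeasure.map fullShift = ν.toMeasure} |
        ∀ᵐ x ∂μ.1.toMeasure, lowerRecRate shiftDist fullShift x = 0} := by
  constructor
  · have : {μ : {ν : ProbabilityMeasure (ℤ → M) // ν.toMeasure.map fullShift = ν.toMeasure} |
        ∀ᵐ x ∂μ.1.toMeasure, lowerRecRate shiftDist fullShift x = 0} =
        ⋂ (k : ℕ) (m : ℕ), Subtype.val ⁻¹' {ν : ProbabilityMeasure (ℤ → M) |
          1 - ((m : ℝ≥0∞) + 1)⁻¹ < ν.toMeasure (goodSet M k)} := by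
      ext μ
      simp only [mem_ofPred_eq, mem_iInter, mem_preimage, lowerRecRate_eq_zero_iff]
      rw [ae_all_iff]
      refine forall_congr' fun k => ?_
      have hms : MeasurableSet (goodSet M k) := (isOpen_goodSet k).measurableSet
      have e : (∀ᵐ x ∂μ.1.toMeasure, x ∈ goodSet M k) ↔ μ.1.toMeasure (goodSet M k) = 1 :=
        mem_ae_iff_prob_eq_one hms
      rw [e]
      constructor
      · intro h m
        rw [h]
        exact ENNReal.sub_lt_self (by simp) (by simp) (by simp)
      · intro h
        refine le_antisymm prob_le_one ?_
        have ht : Tendsto (fun m : ℕ => 1 - ((m : ℝ≥0∞) + 1)⁻¹) atTop (𝓝 (1 - 0)) := by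
          refine ENNReal.Tendsto.sub tendsto_const_nhds ?_ (by simp)
          have := (tendsto_add_atTop_iff_nat 1).2 ENNReal.tendsto_inv_nat_nhds_zero
          simpa using this
        rw [tsub_zero] at ht
        exact le_of_tendsto' ht fun m => (h m).le
    rw [this]
    refine IsGδ.iInter fun k => IsGδ.iInter fun m => IsOpen.isGδ ?_
    exact (isOpen_measure_gt _ (isOpen_goodSet k) _).preimage continuous_subtype_val
  · intro μ
    let ν : ℕ → {ν : ProbabilityMeasure (ℤ → M) // ν.toMeasure.map fullShift = ν.toMeasure} :=
      fun N => ⟨⟨perMeasure (N + 1) μ.1.toMeasure, perMeasure_prob (N + 1) (by omega) _⟩,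
        perMeasure_invariant (N + 1) μ.2⟩
    refine mem_closure_of_tendsto (f := ν) (b := atTop) ?_ (Eventually.of_forall fun N => ?_)
    · rw [tendsto_subtype_rng, ProbabilityMeasure.tendsto_iff_forall_integral_tendsto]
      intro f
      exact tendsto_integral_perMeasure μ.1.toMeasure f
    · exact perMeasure_ae (N + 1) (by omega) μ.1.toMeasure
end
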